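/- Let m ≥ 1 and assume the Riemann hypothesis holds for Δ₃(2,2m;·), i.e. every zero of Δ₃(2,2m;·) with 0 < Re(s) < 1 satisfies Re(s) = 1/2. Let t₀ < t₁ be such that 1/2+it₀ and 1/2+it₁ are successive zeros of Δ₃(2,2m;·) on the critical line (Δ₃(2,2m;1/2+it₀) = Δ₃(2,2m;1/2+it₁) = 0 and Δ₃(2,2m;1/2+it) ≠ 0 for all t ∈ (t₀,t₁)). Then there is exactly one t ∈ (t₀,t₁) such that Im(Δ₃'(2,2m;1/2+it)/Δ₃(2,2m;1/2+it)) = 0; equivalently, exactly one point on the open critical segment between the two zeros at which ∂(arg Δ₃(2,2m;σ+it))/∂σ vanishes. -/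

import Mathlib

/-!
The identity behind the result is that, on the critical line, `t · Im (Δ₃'/Δ₃)(1/2 + it)` splits as
`denP m t - Re (t E'/E (t))` (`mul_phase`). Here `E = lineXi` is the product of the completed
functions `ξ(s)`, `ξ₋₄(s)` and of the completed Hecke `L`-function of the angular character
`z ↦ (z/|z|)^{4m}` of `ℤ[i]`, written in the variable `z = -i (s - 1/2)`, and `denP` is what is left
of the Gamma factors of `Δ₃`, which in the critical strip amount to a polynomial denominator
(`Delta3_eq`).

The first summand is elementary: `denP` is a sum of terms `t² / (a² + t²)`, hence strictly increasing
on `t ≥ 0`. For the second, `E` is entire, even, and of growth slower than every Gaussian, so that by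
Hadamard's partial fractions `t E'/E (t) = ∑ n_a t² / (t² - a²)`, in the finite approximate form
`even_partial_fractions`. If all zeros are real, each term decreases on the zero-free intervals of
the positive axis (`hadamard_antitone`), and is `≤ 0` before the first positive zero
(`hadamard_nonpos`). So `t · Im (Δ₃'/Δ₃)` is strictly increasing between consecutive positive zeros,
even in `t`, and positive for `t ≠ 0` between the two zeros next to the origin; it therefore vanishes
at most once (`phase_unique`). Existence is Rolle's theorem for `|Δ₃|²` along the segment, whose
derivative is `-2 |Δ₃|² Im (Δ₃'/Δ₃)` (`exists_phase_zero`).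

The Riemann hypothesis speaks of the open critical strip only, so the zeros of `E` are known to be
real once `E` has none with `Re s ≥ 1`, and then, by the functional equation, none with `Re s ≤ 0`.
For the angular `L`-function `gL` this is `gL_ne_zero`, by the `3-4-1` inequality; it needs the Euler
product over `ℤ[i]`, used as the statement that `-L'/L` is a sum over prime powers (`gD_logDeriv`).
The continuation and the functional equation of `gL` come from the theta series
`∑ z^{4m} e^{-π |z|² t}` (`thetaK_fe`), obtained by comparing Taylor coefficients in the functional
equation of a product of two Jacobi theta functions.
-/

/-- The angle `θ_{p₁,p₂} = arg(p₁ + i p₂)` of a lattice point. -/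
noncomputable def latticeAngle (p : ℤ × ℤ) : ℝ :=
  Complex.arg ((p.1 : ℂ) + (p.2 : ℂ) * Complex.I)

/-- The angular lattice sum `𝒞(n,m;s)`. -/
noncomputable def latC (n m : ℕ) (s : ℂ) : ℂ :=
  ∑' p : {p : ℤ × ℤ // p ≠ 0},
    ((Real.cos ((m : ℝ) * latticeAngle p.1) : ℂ)) ^ n /
      (((p.1.1 : ℂ)) ^ 2 + ((p.1.2 : ℂ)) ^ 2) ^ s

/-- The angular lattice sum `𝒮(n,m;s)`. -/
noncomputable def latS (n m : ℕ) (s : ℂ) : ℂ :=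
  ∑' p : {p : ℤ × ℤ // p ≠ 0},
    ((Real.sin ((m : ℝ) * latticeAngle p.1) : ℂ)) ^ n /
      (((p.1.1 : ℂ)) ^ 2 + ((p.1.2 : ℂ)) ^ 2) ^ s

/-- The ratio `ℱ_{2m}(s) = Γ(1-s+2m)Γ(s) / (Γ(1-s)Γ(s+2m))`. -/
noncomputable def calF (m : ℕ) (s : ℂ) : ℂ :=
  (Complex.Gamma (1 - s + 2 * m) * Complex.Gamma s) /
    (Complex.Gamma (1 - s) * Complex.Gamma (s + 2 * m))

/-- `Δ₃(2,2m;s) = (Γ(s)² / (π^{2s} ℱ_{2m}(s))) · 4 ζ(s) L(s) · F(s)`, where `L` is the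
L-function of the nontrivial character mod 4 and `F` the continuation of `𝒞(1,4m;·)`. -/
noncomputable def Delta3 (m : ℕ) (L F : ℂ → ℂ) (s : ℂ) : ℂ :=
  (Complex.Gamma s) ^ 2 / ((Real.pi : ℂ) ^ (2 * s) * calF m s) *
    (4 * riemannZeta s * L s) * F s

/-! ### Entire functions: splitting off zeros and partial fractions -/

section

open Complex Metric Set Filter Topology

/-- Splitting off the zero of an entire function at one point. -/
lemma entire_split_zero {E : ℂ → ℂ} (hE : Differentiable ℂ E) (hE0 : E ≠ 0) (a : ℂ) :
    ∃ (n : ℕ) (g : ℂ → ℂ), Differentiable ℂ g ∧ g a ≠ 0 ∧ ∀ z, E z = (z - a) ^ n * g z := by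
  have hfin : analyticOrderAt E a ≠ ⊤ := by
    rw [Ne, AnalyticOnNhd.analyticOrderAt_eq_top_iff_eq_zero a (fun z => hE.analyticAt z)]
    exact hE0
  obtain ⟨n, hn⟩ := ENat.ne_top_iff_exists.mp hfin
  obtain ⟨g, hg, hga, hEg⟩ := (hE.analyticAt a).analyticOrderAt_eq_natCast.mp hn.symm
  classical
  set G : ℂ → ℂ := Function.update (fun z => E z / (z - a) ^ n) a (g a) with hG
  have hGa : G =ᶠ[𝓝 a] g := by
    filter_upwards [hEg] with z hz
    by_cases h : z = a
    · subst h; simp [hG]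
    · have : z - a ≠ 0 := sub_ne_zero.mpr h
      simp only [hG, Function.update_of_ne h, hz, smul_eq_mul]
      field_simp
  refine ⟨n, G, fun z => ?_, by simp [hG, hga], fun z => ?_⟩
  · by_cases h : z = a
    · subst h
      exact (hg.congr hGa.symm).differentiableAt
    · have h1 : z - a ≠ 0 := sub_ne_zero.mpr h
      have : G =ᶠ[𝓝 z] fun z => E z / (z - a) ^ n := by
        filter_upwards [isOpen_ne.mem_nhds h] with w hw
        simp [hG, Function.update_of_ne hw]
      refine DifferentiableAt.congr_of_eventuallyEq ?_ this
      exact (hE z).div (by fun_prop) (pow_ne_zero _ h1)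
  · by_cases h : z = a
    · subst h
      have := hEg.self_of_nhds
      simpa [hG] using this
    · have h1 : z - a ≠ 0 := sub_ne_zero.mpr h
      simp only [hG, Function.update_of_ne h]
      field_simp

/-- Splitting off the zeros of an entire function in a finite set; `n a` is the multiplicity of `a`. -/
lemma entire_split_zeros (Z : Finset ℂ) {E : ℂ → ℂ} (hE : Differentiable ℂ E) (hE0 : E ≠ 0) :
    ∃ (n : ℂ → ℕ) (g : ℂ → ℂ), Differentiable ℂ g ∧ (∀ a ∈ Z, g a ≠ 0) ∧
      ∀ z, E z = (∏ a ∈ Z, (z - a) ^ n a) * g z := by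
  classical
  induction Z using Finset.induction_on with
  | empty => exact ⟨fun _ => 0, E, hE, by simp, by simp⟩
  | insert a Z ha ih =>
    obtain ⟨n, g, hg, hgZ, hEg⟩ := ih
    have hg0 : g ≠ 0 := by
      rintro rfl
      exact hE0 (funext fun z => by simp [hEg])
    obtain ⟨k, h, hh, hha, hgh⟩ := entire_split_zero hg hg0 a
    refine ⟨Function.update n a k, h, hh, fun b hb => ?_, fun z => ?_⟩
    · rcases Finset.mem_insert.mp hb with rfl | hb
      · exact hha
      · intro h0
        exact hgZ b hb (by rw [hgh, h0, mul_zero])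
    · rw [Finset.prod_insert ha, hEg, hgh, Function.update_self]
      have : ∏ b ∈ Z, (z - b) ^ Function.update n a k b = ∏ b ∈ Z, (z - b) ^ n b := by
        refine Finset.prod_congr rfl fun b hb => ?_
        rw [Function.update_of_ne (by rintro rfl; exact ha hb)]
      rw [this]; ring

lemma entire_zeros_finite {E : ℂ → ℂ} (hE : Differentiable ℂ E) (hE0 : E ≠ 0) (R : ℝ) :
    {z ∈ closedBall (0 : ℂ) R | E z = 0}.Finite := by
  by_contra hinf
  obtain ⟨z, hz, hacc⟩ := Set.Infinite.exists_accPt_of_subset_isCompact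
    (s := {z ∈ closedBall (0 : ℂ) R | E z = 0}) hinf (isCompact_closedBall (0:ℂ) R)
    (fun z hz => hz.1)
  refine hE0 ?_
  have := AnalyticOnNhd.eqOn_zero_of_preconnected_of_frequently_eq_zero
    (f := E) (U := univ) (fun z _ => hE.analyticAt z) isPreconnected_univ (mem_univ z) ?_
  · exact funext fun z => this (mem_univ z)
  · rw [accPt_iff_frequently_nhdsNE] at hacc
    exact hacc.mono fun w hw => hw.2

/-- For `g` without zeros on the disc of radius `R` and bounded there by `‖g 0‖ e^M`, the logarithmic
derivative varies by `O(M / R²)` per unit near the centre: Borel–Carathéodory for `log (g / g 0)`,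
then Cauchy's estimate. -/
lemma logDeriv_diff_le {g : ℂ → ℂ} (hg : Differentiable ℂ g) {R M : ℝ} (hR : 0 < R) (hM : 0 < M)
    (hg0 : ∀ z ∈ ball (0 : ℂ) R, g z ≠ 0)
    (hgM : ∀ z ∈ ball (0 : ℂ) R, ‖g z‖ ≤ ‖g 0‖ * Real.exp M) {z w : ℂ}
    (hz : ‖z‖ ≤ R / 8) (hw : ‖w‖ ≤ R / 8) :
    ‖logDeriv g z - logDeriv g w‖ ≤ 64 * M / R ^ 2 * ‖z - w‖ := by
  have hd : DifferentiableOn ℂ (logDeriv g) (ball 0 R) := by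
    intro z hz
    have : DifferentiableAt ℂ (fun z => deriv g z / g z) z :=
      DifferentiableAt.div (hg.deriv z) (hg z) (hg0 z hz)
    exact this.differentiableWithinAt
  obtain ⟨k, hk0, hk⟩ := (hd.isExactOn_ball).with_val_at 0 0
  have h0R : (0:ℂ) ∈ ball (0:ℂ) R := by simpa using hR
  have hexp : ∀ z ∈ ball (0:ℂ) R, g z = g 0 * exp (k z) := by
    intro z hz
    have hconst : ∀ z ∈ ball (0:ℂ) R, HasDerivAt (fun z => g z * exp (-k z)) 0 z := by
      intro z hz
      have h1 := (hg z).hasDerivAt.fun_mul ((hk z hz).fun_neg.cexp)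
      refine h1.congr_deriv ?_
      rw [logDeriv_apply]
      have := hg0 z hz
      field_simp
      ring
    have := (convex_ball (0:ℂ) R).is_const_of_fderivWithin_eq_zero (𝕜 := ℂ)
      (f := fun z => g z * exp (-k z))
      (fun z hz => (hconst z hz).differentiableAt.differentiableWithinAt)
      (fun z hz => by
        rw [((hconst z hz).hasFDerivAt.hasFDerivWithinAt).fderivWithin
          (isOpen_ball.uniqueDiffWithinAt hz)]
        ext; simp) hz h0R
    simp only [hk0, neg_zero, exp_zero, mul_one] at this
    rw [← this, mul_assoc, ← exp_add]
    simp
  have hre : MapsTo k (ball 0 R) {z | z.re ≤ M} := by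
    intro z hz
    have h1 := hgM z hz
    rw [hexp z hz, norm_mul, norm_exp] at h1
    have h2 := le_of_mul_le_mul_left h1 (norm_pos_iff.mpr (hg0 0 h0R))
    exact Real.exp_le_exp.mp h2
  have hkd : DifferentiableOn ℂ k (ball 0 R) := fun z hz =>
    (hk z hz).differentiableAt.differentiableWithinAt
  have hkb : ∀ z ∈ closedBall (0:ℂ) (R/2), ‖k z‖ ≤ 2 * M := by
    intro z hz
    have hz' : ‖z‖ ≤ R/2 := by simpa using hz
    have := borelCaratheodory_zero hM hkd hre hR
      (show z ∈ ball (0:ℂ) R by simp; linarith) hk0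
    refine this.trans ?_
    rw [div_le_iff₀ (by linarith)]
    nlinarith
  have hkb' : ∀ z ∈ closedBall (0:ℂ) (R/4), ‖logDeriv g z‖ ≤ 8 * M / R := by
    intro z hz
    have hz' : ‖z‖ ≤ R/4 := by simpa using hz
    have hsub : closedBall z (R/4) ⊆ closedBall (0:ℂ) (R/2) :=
      closedBall_subset_closedBall' (by rw [dist_zero_right]; linarith)
    have hsub2 : closedBall (0:ℂ) (R/2) ⊆ ball (0:ℂ) R := closedBall_subset_ball (by linarith)
    have := norm_deriv_le_of_forall_mem_sphere_norm_le (c := z) (R := R/4) (C := 2*M) (f := k)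
      (by positivity)
      (DifferentiableOn.diffContOnCl_ball (hkd.mono hsub2) hsub)
      (fun w hw => hkb w (hsub (sphere_subset_closedBall hw)))
    rw [(hk z (hsub2 (hsub (mem_closedBall_self (by positivity))))).deriv] at this
    refine this.trans (le_of_eq ?_)
    field_simp; ring
  have hkb'' : ∀ z ∈ closedBall (0:ℂ) (R/8), ‖deriv (logDeriv g) z‖ ≤ 64 * M / R ^ 2 := by
    intro z hz
    have hz' : ‖z‖ ≤ R/8 := by simpa using hz
    have hsub : closedBall z (R/8) ⊆ closedBall (0:ℂ) (R/4) :=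
      closedBall_subset_closedBall' (by rw [dist_zero_right]; linarith)
    have hsub2 : closedBall (0:ℂ) (R/4) ⊆ ball (0:ℂ) R := closedBall_subset_ball (by linarith)
    have := norm_deriv_le_of_forall_mem_sphere_norm_le (c := z) (R := R/8) (C := 8*M/R)
      (f := logDeriv g) (by positivity)
      (DifferentiableOn.diffContOnCl_ball (hd.mono hsub2) hsub)
      (fun w hw => hkb' w (hsub (sphere_subset_closedBall hw)))
    refine this.trans (le_of_eq ?_)
    field_simp; ring
  refine (convex_closedBall (0:ℂ) (R/8)).norm_image_sub_le_of_norm_deriv_le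
    (fun x hx => ?_) hkb'' (by simpa using hw) (by simpa using hz)
  exact hd.differentiableAt (isOpen_ball.mem_nhds
    (closedBall_subset_ball (by linarith) hx))

/-- Growth slower than every Gaussian `exp (ε |z|²)`. -/
def SubGaussian (E : ℂ → ℂ) : Prop :=
  ∀ ε : ℝ, 0 < ε → ∃ C : ℝ, ∀ z, ‖E z‖ ≤ C * Real.exp (ε * ‖z‖ ^ 2)

lemma logDeriv_even {E : ℂ → ℂ} (heven : ∀ z, E (-z) = E z) (z : ℂ) :
    logDeriv E (-z) = -logDeriv E z := by
  have h : (fun z => E (-z)) = E := funext heven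
  have h1 : deriv E (-z) = - deriv E z := by
    have h2 := deriv_comp_neg E z
    rw [h] at h2
    rw [h2, neg_neg]
  rw [logDeriv_apply, logDeriv_apply, h1, heven, neg_div]

/-- Hadamard's partial fraction expansion for an even entire function of sub-Gaussian growth,
in finite form: on a given disc, up to a prescribed error. -/
lemma even_partial_fractions {E : ℂ → ℂ} (hE : Differentiable ℂ E) (heven : ∀ z, E (-z) = E z)
    (h0 : E 0 ≠ 0) (hG : SubGaussian E) {B δ : ℝ} (hB : 0 < B) (hδ : 0 < δ) :
    ∃ (Z : Finset ℂ) (n : ℂ → ℕ), (∀ a ∈ Z, E a = 0) ∧ ∀ z, ‖z‖ ≤ B → E z ≠ 0 →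
      ‖z * logDeriv E z - ∑ a ∈ Z, (n a : ℂ) * (z ^ 2 / (z ^ 2 - a ^ 2))‖ ≤ δ := by
  have hE0 : E ≠ 0 := by rintro rfl; exact h0 rfl
  -- With this constant `ε`, the part `9 ε R²` of the bound `M` below contributes `576 B² ε = δ / 2`.
  obtain ⟨C, hC⟩ := hG (δ / (1152 * B ^ 2)) (by positivity)
  set ε := δ / (1152 * B ^ 2) with hε
  have hεpos : 0 < ε := by positivity
  have hCpos : 0 < C := by
    have := hC 0
    simp only [norm_zero, ne_eq, OfNat.ofNat_ne_zero, not_false_eq_true, zero_pow, mul_zero,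
      Real.exp_zero, mul_one] at this
    exact (norm_pos_iff.mpr h0).trans_le this
  set A : ℝ := |Real.log (C / ‖E 0‖)| with hA
  have hA0 : 0 ≤ A := abs_nonneg _
  -- The radius is chosen so that the part `A` of `M` contributes at most `64 B² A / R² ≤ δ / 2`.
  set R : ℝ := 1 + 8 * B + 128 * B ^ 2 * A / δ with hR
  have hR1 : 1 ≤ R := by
    have : 0 ≤ 128 * B ^ 2 * A / δ := by positivity
    linarith
  have hR8 : B ≤ R / 8 := by
    have : 0 ≤ 128 * B ^ 2 * A / δ := by positivity
    linarith
  have hRA : 128 * B ^ 2 * A ≤ δ * R ^ 2 := by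
    have h1 : 128 * B ^ 2 * A / δ ≤ R := by linarith
    rw [div_le_iff₀ hδ] at h1
    have h2 : R * δ ≤ δ * R ^ 2 := by
      nlinarith [mul_le_mul_of_nonneg_left hR1 (mul_pos (lt_of_lt_of_le one_pos hR1) hδ).le]
    exact h1.trans h2
  have hRpos : 0 < R := by linarith
  have hfin := entire_zeros_finite hE hE0 R
  set Z := hfin.toFinset with hZ
  obtain ⟨n, g, hg, hgZ, hEg⟩ := entire_split_zeros Z hE hE0
  refine ⟨Z, n, fun a ha => ?_, ?_⟩
  · exact (hfin.mem_toFinset.mp ha).2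
  have haR : ∀ a ∈ Z, ‖a‖ ≤ R := fun a ha => by simpa using (hfin.mem_toFinset.mp ha).1
  have hgR : ∀ z ∈ ball (0:ℂ) R, g z ≠ 0 := by
    intro z hz
    by_cases hzZ : z ∈ Z
    · exact hgZ z hzZ
    · intro h
      apply hzZ
      rw [hZ, hfin.mem_toFinset]
      exact ⟨ball_subset_closedBall hz, by rw [hEg, h, mul_zero]⟩
  set M : ℝ := A + 9 * ε * R ^ 2 with hM
  have hMpos : 0 < M := by positivity
  have hEgn : ∀ z, ‖E z‖ = (∏ a ∈ Z, ‖z - a‖ ^ n a) * ‖g z‖ := fun z => by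
    rw [hEg]; simp
  have hgb : ∀ z ∈ ball (0:ℂ) R, ‖g z‖ ≤ ‖g 0‖ * Real.exp M := by
    intro z hz
    -- Maximum principle on the disc of radius `3 R`: on its boundary `|w - a| ≥ 2 R ≥ |a|` for the
    -- zeros `a`, so dividing them out does not increase the quotient `E w / E 0`.
    refine Complex.norm_le_of_forall_mem_frontier_norm_le (U := ball (0:ℂ) (3 * R))
      isBounded_ball hg.diffContOnCl ?_ (subset_closure
        (ball_subset_ball (by linarith) hz))
    intro w hw
    rw [frontier_ball _ (by positivity), mem_sphere_zero_iff_norm] at hw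
    have h1 : ∏ a ∈ Z, ‖(0:ℂ) - a‖ ^ n a ≤ ∏ a ∈ Z, ‖w - a‖ ^ n a := by
      refine Finset.prod_le_prod (fun a _ => by positivity) fun a ha => ?_
      refine pow_le_pow_left₀ (norm_nonneg _) ?_ _
      have h2 := norm_sub_norm_le w a
      have h3 := haR a ha
      rw [zero_sub, norm_neg]
      linarith
    have h2 := hC w
    have hP0 : 0 < ∏ a ∈ Z, ‖(0:ℂ) - a‖ ^ n a := by
      have h4 := hEgn 0
      rcases (show 0 ≤ ∏ a ∈ Z, ‖(0:ℂ) - a‖ ^ n a by positivity).eq_or_lt with h | h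
      · rw [← h, zero_mul, norm_eq_zero] at h4; exact absurd h4 h0
      · exact h
    have hE0pos : 0 < ‖E 0‖ := norm_pos_iff.mpr h0
    have hCE : C / ‖E 0‖ ≤ Real.exp A := by
      rw [← Real.exp_log (show 0 < C / ‖E 0‖ by positivity)]
      exact Real.exp_le_exp.mpr (le_abs_self _)
    rw [div_le_iff₀ hE0pos, hEgn 0] at hCE
    have h5 : (∏ a ∈ Z, ‖(0:ℂ) - a‖ ^ n a) * ‖g w‖ ≤
        (∏ a ∈ Z, ‖(0:ℂ) - a‖ ^ n a) * (‖g 0‖ * Real.exp M) := by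
      calc _ ≤ (∏ a ∈ Z, ‖w - a‖ ^ n a) * ‖g w‖ := by gcongr
        _ = ‖E w‖ := (hEgn w).symm
        _ ≤ C * Real.exp (ε * ‖w‖ ^ 2) := h2
        _ ≤ (Real.exp A * ((∏ a ∈ Z, ‖(0:ℂ) - a‖ ^ n a) * ‖g 0‖)) *
            Real.exp (ε * ‖w‖ ^ 2) := by gcongr
        _ = _ := by
          rw [hM, Real.exp_add, hw]; ring_nf
    exact le_of_mul_le_mul_left h5 hP0
  intro z hz hEz
  have hzR : ‖z‖ ≤ R / 8 := hz.trans hR8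
  have hld : ∀ z, ‖z‖ ≤ R / 8 → E z ≠ 0 →
      logDeriv E z = (∑ a ∈ Z, (n a : ℂ) / (z - a)) + logDeriv g z := by
    intro z hz hEz
    have hne := hEz
    rw [hEg] at hne
    have hP := left_ne_zero_of_mul hne
    have hgz := right_ne_zero_of_mul hne
    have hfun : E = fun z => (∏ a ∈ Z, (z - a) ^ n a) * g z := funext hEg
    rw [hfun, logDeriv_mul z hP hgz (by fun_prop) (hg z)]
    congr 1
    rw [logDeriv_prod (f := fun a z => (z - a) ^ n a) (fun a ha => Finset.prod_ne_zero_iff.mp hP a ha)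
      (fun a _ => by fun_prop)]
    refine Finset.sum_congr rfl fun a ha => ?_
    rw [logDeriv_fun_pow (by fun_prop), logDeriv_apply]
    simp [div_eq_mul_inv]
  have hz' : ‖-z‖ ≤ R / 8 := by rwa [norm_neg]
  have hEz' : E (-z) ≠ 0 := by rwa [heven]
  have key := logDeriv_diff_le hg hRpos hMpos hgR hgb hzR hz'
  have e1 := hld z hzR hEz
  have e2 := hld (-z) hz' hEz'
  rw [logDeriv_even heven] at e2
  -- Since `E` is even, half the difference of the expansions at `z` and `-z` suffices; this is where
  -- the bound on the variation of the logarithmic derivative of `g` enters.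
  have hsum : ∑ a ∈ Z, (n a : ℂ) * (z ^ 2 / (z ^ 2 - a ^ 2)) =
      z / 2 * ((∑ a ∈ Z, (n a : ℂ) / (z - a)) - ∑ a ∈ Z, (n a : ℂ) / (-z - a)) := by
    rw [← Finset.sum_sub_distrib, Finset.mul_sum]
    refine Finset.sum_congr rfl fun a ha => ?_
    have hEa : E a = 0 := (hfin.mem_toFinset.mp ha).2
    have h1 : z - a ≠ 0 := fun h => hEz (by rw [sub_eq_zero.mp h, hEa])
    have h2 : -z - a ≠ 0 := fun h => hEz' (by rw [sub_eq_zero.mp h, hEa])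
    have h2' : z + a ≠ 0 := fun h => h2 (by linear_combination -h)
    have h3 : z ^ 2 - a ^ 2 ≠ 0 := by
      rw [sq_sub_sq]; exact mul_ne_zero h2' h1
    have h4 : -z - a = -(z + a) := by ring
    rw [h4, div_neg, sub_neg_eq_add, div_add_div _ _ h1 h2', mul_div_assoc', div_mul_div_comm,
      div_eq_div_iff h3 (by simp [h1, h2'])]
    ring
  have hfinal : z * logDeriv E z - ∑ a ∈ Z, (n a : ℂ) * (z ^ 2 / (z ^ 2 - a ^ 2)) =
      z / 2 * (logDeriv g z - logDeriv g (-z)) := by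
    rw [hsum]
    linear_combination z / 2 * e1 - z / 2 * e2
  rw [hfinal, norm_mul]
  have hn1 : ‖z / 2‖ ≤ B / 2 := by
    rw [norm_div, Complex.norm_ofNat]; linarith
  have hn2 : ‖z - -z‖ ≤ 2 * B := by
    rw [sub_neg_eq_add]
    exact (norm_add_le _ _).trans (by linarith)
  calc _ ≤ B / 2 * (64 * M / R ^ 2 * (2 * B)) := by
        gcongr
        exact key.trans (by gcongr)
    _ = 64 * B ^ 2 * A / R ^ 2 + 576 * B ^ 2 * ε := by
        rw [hM]; field_simp; ring
    _ ≤ δ / 2 + δ / 2 := by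
        refine add_le_add ?_ (le_of_eq ?_)
        · rw [div_le_iff₀ (by positivity)]; linarith
        · rw [hε]; field_simp; norm_num
    _ = δ := by ring

section RealZeros
variable {E : ℂ → ℂ}

lemma re_partial_sum (Z : Finset ℂ) (n : ℂ → ℕ) (t : ℝ) (hr : ∀ a ∈ Z, a.im = 0) :
    (∑ a ∈ Z, (n a : ℂ) * ((t : ℂ) ^ 2 / ((t : ℂ) ^ 2 - a ^ 2))).re =
      ∑ a ∈ Z, (n a : ℝ) * (t ^ 2 / (t ^ 2 - a.re ^ 2)) := by
  rw [Complex.re_sum]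
  refine Finset.sum_congr rfl fun a ha => ?_
  have : a = (a.re : ℂ) := Complex.ext rfl (by simp [hr a ha])
  rw [this]
  norm_cast

lemma zero_abs_re (heven : ∀ z, E (-z) = E z) {a : ℂ} (ha : E a = 0) (hr : a.im = 0) :
    E ((|a.re| : ℝ) : ℂ) = 0 := by
  have : a = (a.re : ℂ) := Complex.ext rfl (by simp [hr])
  rcases abs_choice a.re with h | h
  · rw [h, ← this, ha]
  · rw [h, ofReal_neg, heven, ← this, ha]

/-- If an even entire function of sub-Gaussian growth has only real zeros, then `t E'/E (t)`
decreases along zero-free intervals of the positive axis, as the terms `t²/(t²-a²)` do. -/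
lemma hadamard_antitone_aux (hE : Differentiable ℂ E) (heven : ∀ z, E (-z) = E z)
    (h0 : E 0 ≠ 0) (hG : SubGaussian E) (hreal : ∀ a, E a = 0 → a.im = 0) {t t' : ℝ}
    (ht : 0 < t) (htt : t ≤ t') (hno : ∀ u ∈ Icc t t', E (u : ℂ) ≠ 0) :
    ((t' : ℂ) * logDeriv E t').re ≤ ((t : ℂ) * logDeriv E t).re := by
  refine le_of_forall_pos_le_add fun δ hδ => ?_
  obtain ⟨Z, n, hZ, h⟩ := even_partial_fractions hE heven h0 hG (B := t') (δ := δ / 2)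
    (by linarith) (by linarith)
  have h1 := h t' (by simp [abs_of_pos (ht.trans_le htt)]) (hno t' ⟨htt, le_rfl⟩)
  have h2 := h t (by simp [abs_of_pos ht, htt]) (hno t ⟨le_rfl, htt⟩)
  have hr : ∀ a ∈ Z, a.im = 0 := fun a ha => hreal a (hZ a ha)
  have h1' := (abs_le.mp ((abs_re_le_norm _).trans h1)).2
  have h2' := (abs_le.mp ((abs_re_le_norm _).trans h2)).1
  rw [sub_re, re_partial_sum Z n _ hr] at h1' h2'
  have h3 : ∑ a ∈ Z, (n a : ℝ) * (t' ^ 2 / (t' ^ 2 - a.re ^ 2)) ≤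
      ∑ a ∈ Z, (n a : ℝ) * (t ^ 2 / (t ^ 2 - a.re ^ 2)) := by
    refine Finset.sum_le_sum fun a ha => mul_le_mul_of_nonneg_left ?_ (by positivity)
    have hz := zero_abs_re heven (hZ a ha) (hr a ha)
    have hnot : |a.re| < t ∨ t' < |a.re| := by
      by_contra! hc
      exact hno _ hc hz
    have hc0 : 0 ≤ a.re ^ 2 := sq_nonneg _
    have hsq : t ^ 2 ≤ t' ^ 2 := by gcongr
    rcases hnot with hn | hn
    · have hlt : a.re ^ 2 < t ^ 2 := by
        rw [← sq_abs]; gcongr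
      rw [div_le_div_iff₀ (by linarith) (by linarith)]
      nlinarith
    · have hlt : t' ^ 2 < a.re ^ 2 := by
        rw [← sq_abs a.re]; gcongr; linarith
      rw [← neg_div_neg_eq, ← neg_div_neg_eq (t ^ 2), div_le_div_iff₀ (by linarith) (by linarith)]
      nlinarith
  linarith

/-- Before the first positive zero every term `t²/(t²-a²)` of the partial fraction expansion is `≤ 0`. -/
lemma hadamard_nonpos (hE : Differentiable ℂ E) (heven : ∀ z, E (-z) = E z)
    (hG : SubGaussian E) (hreal : ∀ a, E a = 0 → a.im = 0) {t : ℝ}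
    (ht : 0 < t) (hno : ∀ u ∈ Icc 0 t, E (u : ℂ) ≠ 0) :
    ((t : ℂ) * logDeriv E t).re ≤ 0 := by
  have h0 : E 0 ≠ 0 := by simpa using hno 0 ⟨le_rfl, ht.le⟩
  refine le_of_forall_pos_le_add fun δ hδ => ?_
  obtain ⟨Z, n, hZ, h⟩ := even_partial_fractions hE heven h0 hG (B := t) (δ := δ) ht hδ
  have h2 := h t (by simp [abs_of_pos ht]) (hno t ⟨ht.le, le_rfl⟩)
  have hr : ∀ a ∈ Z, a.im = 0 := fun a ha => hreal a (hZ a ha)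
  have h2' := (abs_le.mp ((abs_re_le_norm _).trans h2)).2
  rw [sub_re, re_partial_sum Z n _ hr] at h2'
  have h3 : ∑ a ∈ Z, (n a : ℝ) * (t ^ 2 / (t ^ 2 - a.re ^ 2)) ≤ 0 := by
    refine Finset.sum_nonpos fun a ha => mul_nonpos_of_nonneg_of_nonpos (by positivity) ?_
    have hz := zero_abs_re heven (hZ a ha) (hr a ha)
    have hn : t < |a.re| := by
      by_contra! hc
      exact hno _ ⟨abs_nonneg _, hc⟩ hz
    have hlt : t ^ 2 < a.re ^ 2 := by
      rw [← sq_abs a.re]; gcongr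
    exact div_nonpos_of_nonneg_of_nonpos (by positivity) (by linarith)
  linarith

/-- Version of `hadamard_antitone_aux` allowing a zero at the origin. -/
lemma hadamard_antitone (hE : Differentiable ℂ E) (heven : ∀ z, E (-z) = E z)
    (hG : SubGaussian E) (hreal : ∀ a, E a = 0 → a.im = 0) {t t' : ℝ}
    (ht : 0 < t) (htt : t ≤ t') (hno : ∀ u ∈ Icc t t', E (u : ℂ) ≠ 0) :
    ((t' : ℂ) * logDeriv E t').re ≤ ((t : ℂ) * logDeriv E t).re := by
  have hE0 : E ≠ 0 := by rintro rfl; exact hno t ⟨le_rfl, htt⟩ rfl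
  obtain ⟨n, g, hg, hg0, hEg⟩ := entire_split_zero hE hE0 0
  simp only [sub_zero] at hEg
  have hpar : ∀ z, (-1) ^ n * g (-z) = g z := by
    have : (fun z => (-1) ^ n * g (-z)) = g := by
      refine Continuous.ext_on (s := {(0:ℂ)}ᶜ) (dense_compl_singleton 0)
        ((hg.continuous.comp continuous_neg).const_mul _ |>.congr fun _ => rfl) hg.continuous ?_
      intro z hz
      have hz : z ≠ 0 := hz
      have h1 := heven z
      rw [hEg, hEg, neg_pow] at h1
      have : z ^ n * ((-1) ^ n * g (-z)) = z ^ n * g z := by linear_combination h1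
      exact mul_left_cancel₀ (pow_ne_zero _ hz) this
    exact fun z => congrFun this z
  have hsgn : ((-1) ^ n : ℂ) = 1 := by
    have := hpar 0
    rw [neg_zero] at this
    exact mul_right_cancel₀ hg0 (by rw [this, one_mul])
  have hgeven : ∀ z, g (-z) = g z := fun z => by rw [← hpar z, hsgn, one_mul]
  have hgG : SubGaussian g := by
    intro ε hε
    obtain ⟨C, hC⟩ := hG ε hε
    obtain ⟨K, hK⟩ := (isCompact_closedBall (0:ℂ) 1).exists_bound_of_continuousOn
      hg.continuous.continuousOn
    refine ⟨max C K, fun z => ?_⟩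
    rcases le_total ‖z‖ 1 with hz | hz
    · have h1 := hK z (by simpa using hz)
      have hK0 : 0 ≤ K := (norm_nonneg _).trans h1
      have h2 : 1 ≤ Real.exp (ε * ‖z‖ ^ 2) := Real.one_le_exp (by positivity)
      calc ‖g z‖ ≤ K * 1 := by rw [mul_one]; exact h1
        _ ≤ max C K * Real.exp (ε * ‖z‖ ^ 2) := by
          gcongr
          exact le_max_right _ _
    · have h1 := hC z
      rw [hEg, norm_mul, norm_pow] at h1
      have h2 : 1 ≤ ‖z‖ ^ n := one_le_pow₀ hz
      calc ‖g z‖ ≤ ‖z‖ ^ n * ‖g z‖ := le_mul_of_one_le_left (norm_nonneg _) h2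
        _ ≤ C * Real.exp (ε * ‖z‖ ^ 2) := h1
        _ ≤ _ := by gcongr; exact le_max_left _ _
  have hgreal : ∀ a, g a = 0 → a.im = 0 := fun a ha => hreal a (by rw [hEg, ha, mul_zero])
  have hgno : ∀ u ∈ Icc t t', g (u : ℂ) ≠ 0 := fun u hu h => hno u hu (by rw [hEg, h, mul_zero])
  have hld : ∀ u ∈ Icc t t', (u : ℂ) * logDeriv E u = n + u * logDeriv g u := by
    intro u hu
    have hu0 : (u : ℂ) ≠ 0 := by
      have := ht.trans_le hu.1
      exact_mod_cast this.ne'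
    have hfun : E = fun z => z ^ n * g z := funext hEg
    rw [hfun, logDeriv_mul (f := fun z : ℂ => z ^ n) _ (pow_ne_zero _ hu0) (hgno u hu)
      (by fun_prop) (hg _), logDeriv_fun_pow (by fun_prop), logDeriv_apply]
    simp
    field_simp
  have := hadamard_antitone_aux hg hgeven hg0 hgG hgreal ht htt hgno
  rw [hld t ⟨le_rfl, htt⟩, hld t' ⟨htt, le_rfl⟩, add_re, add_re]
  linarith
end RealZeros

lemma SubGaussian.mul {E F : ℂ → ℂ} (hE : SubGaussian E) (hF : SubGaussian F) :
    SubGaussian (fun z => E z * F z) := by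
  intro ε hε
  obtain ⟨C, hC⟩ := hE (ε / 2) (by linarith)
  obtain ⟨K, hK⟩ := hF (ε / 2) (by linarith)
  refine ⟨C * K, fun z => ?_⟩
  rw [norm_mul]
  calc _ ≤ (C * Real.exp (ε / 2 * ‖z‖ ^ 2)) * (K * Real.exp (ε / 2 * ‖z‖ ^ 2)) :=
        mul_le_mul (hC z) (hK z) (norm_nonneg _) ((norm_nonneg _).trans (hC z))
    _ = C * K * Real.exp (ε * ‖z‖ ^ 2) := by
        rw [mul_mul_mul_comm, ← Real.exp_add]; ring_nf

end

/-! ### Growth of Mellin transforms -/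

section

open Complex Metric Set Filter Topology MeasureTheory

/-- A real power is Gaussian in its exponent, by completing the square. -/
lemma rpow_le_gaussian {ε t σ : ℝ} (hε : 0 < ε) (ht : 0 < t) :
    t ^ σ ≤ Real.exp (ε * σ ^ 2) * Real.exp (Real.log t ^ 2 / (4 * ε)) := by
  rw [Real.rpow_def_of_pos ht, ← Real.exp_add]
  apply Real.exp_le_exp.mpr
  have : ε * σ ^ 2 + Real.log t ^ 2 / (4 * ε) - Real.log t * σ =
      (2 * ε * σ - Real.log t) ^ 2 / (4 * ε) := by field_simp; ring
  have h2 : 0 ≤ (2 * ε * σ - Real.log t) ^ 2 / (4 * ε) := by positivity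
  linarith

lemma exp_log_sq_le {p ε : ℝ} (hp : 0 < p) (hε : 0 < ε) : ∃ K : ℝ, ∀ t : ℝ, 1 ≤ t →
    Real.exp (Real.log t ^ 2 / (4 * ε)) ≤ K * Real.exp (p * t) := by
  refine ⟨Real.exp (4 / (p * ε ^ 2)), fun t ht => ?_⟩
  rw [← Real.exp_add]
  apply Real.exp_le_exp.mpr
  have ht0 : 0 < t := by linarith
  have h1 := Real.log_le_rpow_div ht0.le (show (0:ℝ) < 1 / 4 by norm_num)
  have h0 : 0 ≤ Real.log t := Real.log_nonneg ht
  set u := t ^ (1 / 4 : ℝ) with hu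
  have hu4 : u ^ 4 = t := by
    rw [hu, ← Real.rpow_natCast, ← Real.rpow_mul ht0.le]; norm_num
  have h2 : Real.log t ^ 2 ≤ 16 * u ^ 2 := by
    calc _ ≤ (u / (1 / 4)) ^ 2 := by gcongr
      _ = _ := by ring
  have h3 : Real.log t ^ 2 / (4 * ε) ≤ 4 * u ^ 2 / ε := by
    rw [div_le_div_iff₀ (by positivity) hε]; nlinarith
  have h4 : 4 / (p * ε ^ 2) + p * t - 4 * u ^ 2 / ε = (p * u ^ 2 - 2 / ε) ^ 2 / p := by
    rw [← hu4]; field_simp; ring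
  have h5 : 0 ≤ (p * u ^ 2 - 2 / ε) ^ 2 / p := by positivity
  linarith

/-- Mellin transforms of exponentially decaying functions have sub-Gaussian growth in right
half-planes. -/
lemma mellin_growth {g : ℝ → ℂ} {σ₀ p : ℝ} (hloc : LocallyIntegrableOn g (Ioi 0)) (hp : 0 < p)
    (htop : g =O[atTop] fun t => Real.exp (-p * t)) (hconv : MellinConvergent g (σ₀ : ℂ))
    {ε : ℝ} (hε : 0 < ε) :
    ∃ C : ℝ, 0 ≤ C ∧ ∀ s : ℂ, σ₀ ≤ s.re → ‖mellin g s‖ ≤ C * Real.exp (ε * s.re ^ 2) := by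
  obtain ⟨K, hK⟩ := exp_log_sq_le (p := p / 2) (half_pos hp) hε
  have hint1 : IntegrableOn (fun t : ℝ => Real.exp (p / 2 * t) * ‖g t‖) (Ici 1) := by
    refine LocallyIntegrableOn.integrableOn_of_isBigO_atTop
      (g := fun t => Real.exp (-(p / 2) * t)) ?_ ?_ ?_
    · refine LocallyIntegrableOn.continuousOn_mul (f := fun t => ‖g t‖)
        (g := fun t => Real.exp (p / 2 * t))
        (hloc.norm.mono_set fun t (ht : 1 ≤ t) => lt_of_lt_of_le one_pos ht)
        (by fun_prop) isClosed_Ici.isLocallyClosed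
    · have := (Asymptotics.isBigO_refl (fun t : ℝ => Real.exp (p / 2 * t)) atTop).mul htop.norm_left
      refine this.congr_right fun t => ?_
      rw [← Real.exp_add]; ring_nf
    · exact ⟨Ioi 0, Ioi_mem_atTop 0, exp_neg_integrableOn_Ioi 0 (half_pos hp)⟩
  have hint0 : IntegrableOn (fun t : ℝ => t ^ (σ₀ - 1) * ‖g t‖) (Ioi 0) := by
    have hc : Integrable (fun t : ℝ => (t : ℂ) ^ ((σ₀ : ℂ) - 1) • g t)
      (volume.restrict (Ioi 0)) := hconv
    refine (IntegrableOn.congr_fun (Integrable.norm hc) (fun t ht => ?_)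
      measurableSet_Ioi)
    simp only [norm_smul]
    rw [norm_cpow_eq_rpow_re_of_pos ht]
    simp
  set H : ℝ → ℝ := fun t => t ^ (σ₀ - 1) * ‖g t‖ +
    (Ici (1:ℝ)).indicator (fun t => K * (Real.exp (p / 2 * t) * ‖g t‖)) t with hH
  have hHint : IntegrableOn H (Ioi 0) := by
    refine Integrable.add hint0 ?_
    have : Integrable ((Ici (1:ℝ)).indicator (fun t => K * (Real.exp (p / 2 * t) * ‖g t‖))) :=
      (integrable_indicator_iff measurableSet_Ici).mpr (hint1.const_mul K)
    exact this.integrableOn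
  have hK0 : 0 ≤ K := by
    by_contra! h
    have h1 := hK 1 le_rfl
    have h2 := Real.exp_pos (Real.log 1 ^ 2 / (4 * ε))
    have h3 := Real.exp_pos (p / 2 * 1)
    nlinarith
  have hH0 : ∀ t ∈ Ioi (0:ℝ), 0 ≤ H t := by
    intro t (ht : 0 < t)
    simp only [hH]
    refine add_nonneg (by positivity) (indicator_nonneg (fun _ _ => by positivity) _)
  refine ⟨∫ t in Ioi 0, H t, setIntegral_nonneg measurableSet_Ioi hH0, fun s hs => ?_⟩
  rw [mellin, ← integral_mul_const]
  refine norm_integral_le_of_norm_le (hHint.mul_const _) ?_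
  refine (ae_restrict_iff' measurableSet_Ioi).mpr (Eventually.of_forall fun t ht => ?_)
  have ht0 : (0:ℝ) < t := ht
  rw [norm_smul, norm_cpow_eq_rpow_re_of_pos ht0, sub_re, one_re]
  have h1e : 1 ≤ Real.exp (ε * s.re ^ 2) := Real.one_le_exp (by positivity)
  by_cases h1 : 1 ≤ t
  · have h2 : t ^ (s.re - 1) ≤ Real.exp (ε * s.re ^ 2) * (K * Real.exp (p / 2 * t)) := by
      calc _ ≤ t ^ s.re := Real.rpow_le_rpow_of_exponent_le h1 (by linarith)
        _ ≤ _ := rpow_le_gaussian hε ht0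
        _ ≤ _ := by gcongr; exact hK t h1
    have h3 : K * (Real.exp (p / 2 * t) * ‖g t‖) ≤ H t := by
      simp only [hH, indicator_of_mem (mem_Ici.mpr h1)]
      have : 0 ≤ t ^ (σ₀ - 1) * ‖g t‖ := by positivity
      linarith
    calc _ ≤ (Real.exp (ε * s.re ^ 2) * (K * Real.exp (p / 2 * t))) * ‖g t‖ := by gcongr
      _ = (K * (Real.exp (p / 2 * t) * ‖g t‖)) * Real.exp (ε * s.re ^ 2) := by ring
      _ ≤ _ := by gcongr
  · push Not at h1
    have h2 : t ^ (s.re - 1) ≤ t ^ (σ₀ - 1) :=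
      Real.rpow_le_rpow_of_exponent_ge ht0 h1.le (by linarith)
    have h3 : t ^ (σ₀ - 1) * ‖g t‖ = H t := by
      simp only [hH]
      rw [indicator_of_notMem (by simpa using h1), add_zero]
    calc _ ≤ t ^ (σ₀ - 1) * ‖g t‖ := by gcongr
      _ = H t * 1 := by rw [h3, mul_one]
      _ ≤ _ := mul_le_mul_of_nonneg_left h1e (hH0 t ht)

lemma WeakFEPair_growth_aux (P : WeakFEPair ℂ) {p : ℝ} (hp : 0 < p)
    (hf : (fun t => P.f t - P.f₀) =O[atTop] fun t => Real.exp (-p * t)) {ε : ℝ} (hε : 0 < ε) :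
    ∃ C : ℝ, 0 ≤ C ∧ ∀ s : ℂ, P.k / 2 ≤ s.re → ‖P.Λ₀ s‖ ≤ C * Real.exp (ε * s.re ^ 2) := by
  refine mellin_growth P.hf_modif_int hp ?_ ?_ hε
  · refine hf.congr' ?_ EventuallyEq.rfl
    filter_upwards [eventually_gt_atTop 1] with t ht
    simp [WeakFEPair.f_modif, ht, not_lt_of_gt ht]
  · exact (P.isStrongFEPair_toStrongFEPair.hasMellin _).1

/-- Sub-Gaussian growth of the completed function: right of `k/2` it is a Mellin transform, and the
functional equation carries the bound to the left. -/
lemma WeakFEPair_subGaussian (P : WeakFEPair ℂ) {p q : ℝ} (hp : 0 < p) (hq : 0 < q)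
    (hf : (fun t => P.f t - P.f₀) =O[atTop] fun t => Real.exp (-p * t))
    (hg : (fun t => P.g t - P.g₀) =O[atTop] fun t => Real.exp (-q * t)) :
    SubGaussian P.Λ₀ := by
  intro ε hε
  obtain ⟨C, hC0, hC⟩ := WeakFEPair_growth_aux P hp hf (ε := ε / 2) (half_pos hε)
  obtain ⟨D, hD0, hD⟩ := WeakFEPair_growth_aux P.symm hq hg (ε := ε / 2) (half_pos hε)
  refine ⟨C + ‖P.ε‖ * (D * Real.exp (ε * P.k ^ 2)), fun s => ?_⟩
  have hsq : s.re ^ 2 ≤ ‖s‖ ^ 2 := by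
    rw [← sq_abs]; gcongr; exact abs_re_le_norm s
  have hE := Real.exp_pos (ε * ‖s‖ ^ 2)
  rw [add_mul]
  rcases le_total (P.k / 2) s.re with h | h
  · refine (hC s h).trans ?_
    have h1 : Real.exp (ε / 2 * s.re ^ 2) ≤ Real.exp (ε * ‖s‖ ^ 2) := by
      apply Real.exp_le_exp.mpr; nlinarith [sq_nonneg s.re]
    have h2 : 0 ≤ ‖P.ε‖ * (D * Real.exp (ε * P.k ^ 2)) * Real.exp (ε * ‖s‖ ^ 2) := by positivity
    have := mul_le_mul_of_nonneg_left h1 hC0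
    linarith
  · have h1 := P.functional_equation₀ (P.k - s)
    rw [sub_sub_cancel] at h1
    have h2 := hD (P.k - s) (by simp; linarith)
    rw [h1, norm_smul]
    have h3 : Real.exp (ε / 2 * ((P.k : ℂ) - s).re ^ 2) ≤
        Real.exp (ε * P.k ^ 2) * Real.exp (ε * ‖s‖ ^ 2) := by
      rw [← Real.exp_add]
      apply Real.exp_le_exp.mpr
      simp only [sub_re, ofReal_re]
      nlinarith [sq_nonneg (P.k + s.re)]
    calc _ ≤ ‖P.ε‖ * (D * (Real.exp (ε * P.k ^ 2) * Real.exp (ε * ‖s‖ ^ 2))) := by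
          gcongr
          exact h2.trans (by gcongr)
      _ = ‖P.ε‖ * (D * Real.exp (ε * P.k ^ 2)) * Real.exp (ε * ‖s‖ ^ 2) := by ring
      _ ≤ _ := le_add_of_nonneg_left (by positivity)

lemma SubGaussian.nonneg_const {E : ℂ → ℂ} (hE : SubGaussian E) {ε : ℝ} (hε : 0 < ε) :
    ∃ C : ℝ, 0 ≤ C ∧ ∀ z, ‖E z‖ ≤ C * Real.exp (ε * ‖z‖ ^ 2) := by
  obtain ⟨C, hC⟩ := hE ε hε
  refine ⟨C, ?_, hC⟩
  have := (norm_nonneg _).trans (hC 0)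
  exact nonneg_of_mul_nonneg_left this (Real.exp_pos _)

lemma SubGaussian.add {E F : ℂ → ℂ} (hE : SubGaussian E) (hF : SubGaussian F) :
    SubGaussian (fun z => E z + F z) := by
  intro ε hε
  obtain ⟨C, hC⟩ := hE ε hε
  obtain ⟨K, hK⟩ := hF ε hε
  refine ⟨C + K, fun z => ?_⟩
  rw [add_mul]
  exact (norm_add_le _ _).trans (add_le_add (hC z) (hK z))

lemma SubGaussian.comp_affine {E : ℂ → ℂ} (hE : SubGaussian E) (α β : ℂ) :
    SubGaussian (fun z => E (α * z + β)) := by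
  intro ε hε
  set η := ε / (2 * (‖α‖ ^ 2 + 1)) with hη
  have hηpos : 0 < η := by positivity
  obtain ⟨C, hC0, hC⟩ := hE.nonneg_const hηpos
  refine ⟨C * Real.exp (2 * η * ‖β‖ ^ 2), fun z => (hC _).trans ?_⟩
  rw [mul_assoc, ← Real.exp_add]
  gcongr
  have h1 : ‖α * z + β‖ ≤ ‖α‖ * ‖z‖ + ‖β‖ := by
    rw [← norm_mul]; exact norm_add_le _ _
  have h2 : ‖α * z + β‖ ^ 2 ≤ 2 * (‖α‖ ^ 2 * ‖z‖ ^ 2) + 2 * ‖β‖ ^ 2 := by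
    calc _ ≤ (‖α‖ * ‖z‖ + ‖β‖) ^ 2 := by gcongr
      _ ≤ _ := by nlinarith [sq_nonneg (‖α‖ * ‖z‖ - ‖β‖)]
  have h3 : η * (2 * ‖α‖ ^ 2) ≤ ε := by
    rw [hη, div_mul_eq_mul_div, div_le_iff₀ (by positivity)]
    nlinarith
  calc _ ≤ η * (2 * (‖α‖ ^ 2 * ‖z‖ ^ 2) + 2 * ‖β‖ ^ 2) := by gcongr
    _ = η * (2 * ‖α‖ ^ 2) * ‖z‖ ^ 2 + 2 * η * ‖β‖ ^ 2 := by ring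
    _ ≤ ε * ‖z‖ ^ 2 + 2 * η * ‖β‖ ^ 2 := by gcongr
    _ = _ := by ring

lemma SubGaussian.const (c : ℂ) : SubGaussian (fun _ => c) := fun ε hε =>
  ⟨‖c‖, fun z => le_mul_of_one_le_right (norm_nonneg _) (Real.one_le_exp (by positivity))⟩

lemma SubGaussian.cexp : SubGaussian Complex.exp := by
  intro ε hε
  refine ⟨Real.exp (1 / (4 * ε)), fun z => ?_⟩
  rw [norm_exp, ← Real.exp_add]
  apply Real.exp_le_exp.mpr
  have h1 := (le_abs_self _).trans (abs_re_le_norm z)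
  have : 1 / (4 * ε) + ε * ‖z‖ ^ 2 - ‖z‖ = (2 * ε * ‖z‖ - 1) ^ 2 / (4 * ε) := by field_simp; ring
  have h2 : 0 ≤ (2 * ε * ‖z‖ - 1) ^ 2 / (4 * ε) := by positivity
  linarith

lemma SubGaussian.id : SubGaussian (fun z => z) := by
  intro ε hε
  refine ⟨1 / (4 * ε) + 1, fun z => ?_⟩
  have h1 : ‖z‖ ≤ 1 / (4 * ε) + ε * ‖z‖ ^ 2 := by
    have : 1 / (4 * ε) + ε * ‖z‖ ^ 2 - ‖z‖ = (2 * ε * ‖z‖ - 1) ^ 2 / (4 * ε) := by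
      field_simp; ring
    have h2 : 0 ≤ (2 * ε * ‖z‖ - 1) ^ 2 / (4 * ε) := by positivity
    linarith
  have h2 := Real.add_one_le_exp (ε * ‖z‖ ^ 2)
  have h3 : 1 / (4 * ε) ≤ 1 / (4 * ε) * Real.exp (ε * ‖z‖ ^ 2) :=
    le_mul_of_one_le_right (by positivity) (Real.one_le_exp (by positivity))
  rw [add_mul]
  linarith

end

/-! ### Completed zeta function and the `L`-function modulo 4 -/

section

open Complex Metric Set Filter Topology MeasureTheory HurwitzZeta

lemma completedRiemannZeta₀_subGaussian : SubGaussian completedRiemannZeta₀ := by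
  obtain ⟨p, hp, hf⟩ := isBigO_atTop_evenKernel_sub 0
  obtain ⟨q, hq, hg⟩ := isBigO_atTop_cosKernel_sub 0
  have h := WeakFEPair_subGaussian (hurwitzEvenFEPair 0) hp hq
    (by
      refine (Complex.isBigO_ofReal_left.mpr hf).congr_left fun t => ?_
      simp [hurwitzEvenFEPair])
    (by
      refine (Complex.isBigO_ofReal_left.mpr hg).congr_left fun t => ?_
      simp [hurwitzEvenFEPair])
  have h2 := (h.comp_affine (1 / 2) 0).mul (SubGaussian.const (1 / 2))
  convert h2 using 2 with z
  simp only [completedRiemannZeta₀, completedHurwitzZetaEven₀]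
  rw [add_zero, one_div_mul_eq_div, mul_one_div]

lemma completedHurwitzZetaOdd_subGaussian (a : UnitAddCircle) :
    SubGaussian (completedHurwitzZetaOdd a) := by
  obtain ⟨p, hp, hf⟩ := isBigO_atTop_oddKernel a
  obtain ⟨q, hq, hg⟩ := isBigO_atTop_sinKernel a
  have h := WeakFEPair_subGaussian (hurwitzOddFEPair a) hp hq
    (by
      refine (Complex.isBigO_ofReal_left.mpr hf).congr_left fun t => ?_
      simp [hurwitzOddFEPair])
    (by
      refine (Complex.isBigO_ofReal_left.mpr hg).congr_left fun t => ?_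
      simp [hurwitzOddFEPair])
  have h2 := (h.comp_affine (1 / 2) (1 / 2)).mul (SubGaussian.const (1 / 2))
  convert h2 using 2 with z
  have : (1 / 2 : ℂ) * z + 1 / 2 = (z + 1) / 2 := by ring
  rw [this, mul_one_div, completedHurwitzZetaOdd, WeakFEPair.Λ]
  simp [hurwitzOddFEPair]

/-- The Riemann `ξ`-function `s (1 - s) Λ(s)`, up to normalization. -/
noncomputable def xiZ (s : ℂ) : ℂ := s * (1 - s) * completedRiemannZeta₀ s - 1

lemma xiZ_eq {s : ℂ} (h0 : s ≠ 0) (h1 : s ≠ 1) :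
    xiZ s = s * (1 - s) * completedRiemannZeta s := by
  have h1' : 1 - s ≠ 0 := sub_ne_zero.mpr h1.symm
  rw [xiZ, completedRiemannZeta_eq]
  field_simp
  ring

lemma differentiable_xiZ : Differentiable ℂ xiZ := by
  have := differentiable_completedZeta₀
  unfold xiZ
  fun_prop

lemma xiZ_one_sub (s : ℂ) : xiZ (1 - s) = xiZ s := by
  rw [xiZ, xiZ, completedRiemannZeta₀_one_sub]; ring

lemma xiZ_subGaussian : SubGaussian xiZ := by
  have h1 := SubGaussian.id
  have h2 := h1.comp_affine (-1) 1
  have := ((h1.mul h2).mul completedRiemannZeta₀_subGaussian).add (SubGaussian.const (-1))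
  convert this using 2 with s
  rw [xiZ]; ring

lemma xiZ_ne_zero_of_one_le {s : ℂ} (hs : 1 ≤ s.re) : xiZ s ≠ 0 := by
  by_cases h1 : s = 1
  · simp [xiZ, h1]
  have h0 : s ≠ 0 := by rintro rfl; simp at hs; linarith
  have h1' : 1 - s ≠ 0 := sub_ne_zero.mpr (Ne.symm h1)
  rw [xiZ_eq h0 h1]
  have h2 := riemannZeta_ne_zero_of_one_le_re hs
  rw [riemannZeta_def_of_ne_zero h0] at h2
  exact mul_ne_zero (mul_ne_zero h0 h1') (div_ne_zero_iff.mp h2).1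

section chi4
variable {χ : DirichletCharacter ℂ 4}

lemma chi4_values (hχ : χ ≠ 1) : χ 0 = 0 ∧ χ 1 = 1 ∧ χ 2 = 0 ∧ χ 3 = -1 := by
  have h0 : χ 0 = 0 := χ.map_nonunit (by decide)
  have h2 : χ 2 = 0 := χ.map_nonunit (by decide)
  have h33 : χ 3 * χ 3 = 1 := by
    rw [← map_mul]
    have : (3 : ZMod 4) * 3 = 1 := by decide
    rw [this, map_one]
  refine ⟨h0, map_one χ, h2, ?_⟩
  rcases mul_self_eq_one_iff.mp h33 with h | h
  · exfalso
    apply hχ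
    ext u
    rw [MulChar.one_apply_coe]
    have : (u : ZMod 4) = 1 ∨ (u : ZMod 4) = 3 := by
      revert u; decide
    rcases this with hu | hu <;> rw [hu]
    · exact map_one χ
    · exact h
  · exact h

lemma chi4_odd (hχ : χ ≠ 1) : Function.Odd χ := by
  obtain ⟨h0, h1, h2, h3⟩ := chi4_values hχ
  intro j
  have e1 : (-1 : ZMod 4) = 3 := by decide
  have e2 : (-2 : ZMod 4) = 2 := by decide
  have e3 : (-3 : ZMod 4) = 1 := by decide
  have : j = 0 ∨ j = 1 ∨ j = 2 ∨ j = 3 := by revert j; decide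
  rcases this with rfl | rfl | rfl | rfl <;> simp [h0, h1, h2, h3, e1, e2, e3]

/-- The Gauss sum of the nontrivial character modulo 4, with the additive character conjugated,
is `-2i`. -/
lemma chi4_dft (hχ : χ ≠ 1) : ZMod.dft (χ : ZMod 4 → ℂ) = fun j => (-2 * I) * χ j := by
  obtain ⟨h0, h1, h2, h3⟩ := chi4_values hχ
  have hz : (ZMod.stdAddChar (0 : ZMod 4) : ℂ) = 1 := by simp
  have hs1 : (ZMod.stdAddChar (1 : ZMod 4) : ℂ) = I := by
    have := ZMod.stdAddChar_coe (N := 4) 1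
    simp only [Int.cast_one, Nat.cast_ofNat, mul_one] at this
    rw [this, show 2 * (Real.pi : ℂ) * I / 4 = (Real.pi / 2 : ℂ) * I by ring, exp_pi_div_two_mul_I]
  have hs2 : (ZMod.stdAddChar (2 : ZMod 4) : ℂ) = -1 := by
    have : (2 : ZMod 4) = 1 + 1 := by decide
    rw [this, AddChar.map_add_eq_mul, hs1, I_mul_I]
  have hs3 : (ZMod.stdAddChar (3 : ZMod 4) : ℂ) = -I := by
    have : (3 : ZMod 4) = 2 + 1 := by decide
    rw [this, AddChar.map_add_eq_mul, hs1, hs2]; ring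
  funext k
  rw [ZMod.dft_apply]
  have hu : (Finset.univ : Finset (ZMod 4)) = {0, 1, 2, 3} := by decide
  rw [hu, Finset.sum_insert (by decide), Finset.sum_insert (by decide),
    Finset.sum_insert (by decide), Finset.sum_singleton]
  have : k = 0 ∨ k = 1 ∨ k = 2 ∨ k = 3 := by revert k; decide
  have e1 : (-1 : ZMod 4) = 3 := by decide
  have e2 : (-2 : ZMod 4) = 2 := by decide
  have e3 : (-3 : ZMod 4) = 1 := by decide
  have e4 : (-(3 * 2) : ZMod 4) = 2 := by decide
  have e5 : (-(3 * 3) : ZMod 4) = 3 := by decide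
  rcases this with rfl | rfl | rfl | rfl <;>
    simp [h0, h1, h2, h3, e1, e2, e3, e4, e5, hs1, hs2, hs3] <;> ring

/-- The completed `L`-function of the nontrivial character modulo 4, normalized so as to be
invariant under `s ↦ 1 - s`. -/
noncomputable def xiL (χ : DirichletCharacter ℂ 4) (s : ℂ) : ℂ :=
  2 ^ s * χ.completedLFunction s

lemma differentiable_xiL (hχ : χ ≠ 1) : Differentiable ℂ (xiL χ) := by
  have h1 := DirichletCharacter.differentiable_completedLFunction hχ
  unfold xiL
  fun_prop (disch := norm_num)

lemma xiL_one_sub (hχ : χ ≠ 1) (s : ℂ) : xiL χ (1 - s) = xiL χ s := by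
  rw [xiL, xiL, DirichletCharacter.completedLFunction, ZMod.completedLFunction_one_sub_odd
    (chi4_odd hχ), chi4_dft hχ, ZMod.completedLFunction_const_mul,
    DirichletCharacter.completedLFunction]
  have h4 : ((4 : ℕ) : ℂ) ^ (s - 1) = 2 ^ (s - 1) * 2 ^ (s - 1) := by
    rw [show ((4 : ℕ) : ℂ) = ((2 : ℝ) : ℂ) * ((2 : ℝ) : ℂ) by norm_num,
      mul_cpow_ofReal_nonneg (by norm_num) (by norm_num)]
    norm_num
  have h5 : (2 : ℂ) ^ (1 - s) * 2 ^ (s - 1) = 1 := by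
    rw [← cpow_add _ _ two_ne_zero]; simp
  have h6 : (2 : ℂ) ^ (s - 1) * 2 = 2 ^ s := by
    rw [cpow_sub _ _ two_ne_zero, cpow_one]
    field_simp
  rw [h4]
  linear_combination (2 ^ (s - 1) * 2 * ZMod.completedLFunction (χ : ZMod 4 → ℂ) s) * h5
    + ZMod.completedLFunction (χ : ZMod 4 → ℂ) s * h6 - (2 : ℂ) ^ (1 - s) * 2 ^ (s - 1) *
      2 ^ (s - 1) * 2 * ZMod.completedLFunction (χ : ZMod 4 → ℂ) s * I_sq

lemma subGaussian_cpow {b : ℂ} (hb : b ≠ 0) (c : ℂ) : SubGaussian (fun s => b ^ (c * s)) := by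
  convert SubGaussian.cexp.comp_affine (log b * c) 0 using 2 with s
  rw [cpow_def_of_ne_zero hb]; ring_nf

lemma xiL_subGaussian (hχ : χ ≠ 1) : SubGaussian (xiL χ) := by
  have hsum : SubGaussian fun s => ∑ j : ZMod 4, χ j *
      completedHurwitzZetaOdd (ZMod.toAddCircle j) s := by
    have : ∀ S : Finset (ZMod 4), SubGaussian fun s => ∑ j ∈ S, χ j *
        completedHurwitzZetaOdd (ZMod.toAddCircle j) s := by
      intro S
      induction S using Finset.induction_on with
      | empty => simpa using SubGaussian.const 0
      | insert a S ha ih =>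
        simp only [Finset.sum_insert ha]
        exact ((SubGaussian.const _).mul (completedHurwitzZetaOdd_subGaussian _)).add ih
    exact this _
  have h := (subGaussian_cpow two_ne_zero 1).mul
    ((subGaussian_cpow (b := ((4 : ℕ) : ℂ)) (by norm_num) (-1)).mul hsum)
  convert h using 2 with s
  rw [xiL, DirichletCharacter.completedLFunction, ZMod.completedLFunction_def_odd (chi4_odd hχ)]
  simp

lemma LFunction_eq_chi4 (hχ : χ ≠ 1) (s : ℂ) :
    χ.LFunction s = χ.completedLFunction s / Gammaℝ (s + 1) :=
  ZMod.LFunction_eq_completed_div_gammaFactor_odd (chi4_odd hχ) s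

lemma xiL_ne_zero_of_one_le (hχ : χ ≠ 1) {s : ℂ} (hs : 1 ≤ s.re) : xiL χ s ≠ 0 := by
  have h := DirichletCharacter.LFunction_ne_zero_of_one_le_re χ (.inl hχ) hs
  rw [LFunction_eq_chi4 hχ] at h
  exact mul_ne_zero (by simp [cpow_eq_zero_iff]) (div_ne_zero_iff.mp h).1
end chi4

end

/-! ### Theta series with harmonic polynomials -/

section

open Complex Metric Set Filter Topology MeasureTheory HurwitzZeta

/-- The Gaussian integer attached to a lattice point, as a complex number. -/
noncomputable def lz (p : ℤ × ℤ) : ℂ := (p.1 : ℂ) + (p.2 : ℂ) * I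

/-- The quadratic form `p₁² + p₂²`. -/
def nq (p : ℤ × ℤ) : ℝ := (p.1 : ℝ) ^ 2 + (p.2 : ℝ) ^ 2

lemma nq_nonneg (p : ℤ × ℤ) : 0 ≤ nq p := by unfold nq; positivity

lemma norm_lz_sq (p : ℤ × ℤ) : ‖lz p‖ ^ 2 = nq p := by
  rw [← Complex.normSq_eq_norm_sq, lz, nq, Complex.normSq_apply]
  simp; ring

lemma norm_lz_le (p : ℤ × ℤ) : ‖lz p‖ ≤ |(p.1 : ℝ)| + |(p.2 : ℝ)| := by
  unfold lz
  refine (norm_add_le _ _).trans ?_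
  simp

lemma one_le_nq {p : ℤ × ℤ} (hp : p ≠ 0) : 1 ≤ nq p := by
  have h : (1 : ℤ) ≤ p.1 ^ 2 + p.2 ^ 2 := by
    by_contra hh
    have h1 : p.1 ^ 2 = 0 := by nlinarith [sq_nonneg p.1, sq_nonneg p.2]
    have h2 : p.2 ^ 2 = 0 := by nlinarith [sq_nonneg p.1, sq_nonneg p.2]
    exact hp (Prod.ext (by simpa using h1) (by simpa using h2))
  unfold nq
  exact_mod_cast h

lemma summable_exp_lz (A : ℝ) {t : ℝ} (ht : 0 < t) :
    Summable fun p : ℤ × ℤ => Real.exp (A * ‖lz p‖) * Real.exp (-Real.pi * nq p * t) := by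
  have hA : Summable fun n : ℤ => Real.exp (-Real.pi * (t * n ^ 2 - 2 * (|A| / (2 * Real.pi)) * |n|)) := by
    simpa using summable_pow_mul_jacobiTheta₂_term_bound (|A| / (2 * Real.pi)) ht 0
  refine Summable.of_nonneg_of_le (fun _ => by positivity) (fun p => ?_)
    (hA.mul_of_nonneg hA (fun _ => (Real.exp_pos _).le) (fun _ => (Real.exp_pos _).le))
  rw [← Real.exp_add, ← Real.exp_add]
  apply Real.exp_le_exp.mpr
  have h1 : A * ‖lz p‖ ≤ |A| * (|(p.1 : ℝ)| + |(p.2 : ℝ)|) :=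
    mul_le_mul (le_abs_self A) (norm_lz_le p) (norm_nonneg _) (abs_nonneg _)
  have hpi := Real.pi_pos
  unfold nq
  push_cast
  calc _ ≤ |A| * (|(p.1 : ℝ)| + |(p.2 : ℝ)|) + (-Real.pi * (((p.1 : ℝ)) ^ 2 + (p.2 : ℝ) ^ 2) * t) := by
        linarith
    _ = _ := by field_simp; ring

lemma summable_pow_lz (k : ℕ) {t : ℝ} (ht : 0 < t) :
    Summable fun p : ℤ × ℤ => ‖lz p‖ ^ k * Real.exp (-Real.pi * nq p * t) := by
  refine Summable.of_nonneg_of_le (fun _ => by positivity) (fun p => ?_)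
    ((summable_exp_lz 1 ht).mul_left (k.factorial : ℝ))
  rw [← mul_assoc]
  refine mul_le_mul_of_nonneg_right ?_ (Real.exp_pos _).le
  have := Real.pow_div_factorial_le_exp ‖lz p‖ (norm_nonneg _) k
  rw [div_le_iff₀ (by positivity)] at this
  rw [one_mul]; linarith

/-- Theta series with the harmonic polynomial `z ^ k`. -/
noncomputable def thetaK (k : ℕ) (t : ℝ) : ℂ :=
  ∑' p : ℤ × ℤ, lz p ^ k * (Real.exp (-Real.pi * nq p * t) : ℂ)

lemma norm_thetaK_term (k : ℕ) (t : ℝ) (p : ℤ × ℤ) :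
    ‖lz p ^ k * (Real.exp (-Real.pi * nq p * t) : ℂ)‖ =
      ‖lz p‖ ^ k * Real.exp (-Real.pi * nq p * t) := by
  rw [norm_mul, norm_pow, Complex.norm_real, Real.norm_of_nonneg (Real.exp_pos _).le]

lemma hasSum_thetaK (k : ℕ) {t : ℝ} (ht : 0 < t) :
    HasSum (fun p : ℤ × ℤ => lz p ^ k * (Real.exp (-Real.pi * nq p * t) : ℂ)) (thetaK k t) := by
  refine Summable.hasSum (Summable.of_norm ?_)
  simp_rw [norm_thetaK_term]
  exact summable_pow_lz k ht

/-- Generating function of the theta series `thetaK k t`. -/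
noncomputable def thetaG (t : ℝ) (ζ : ℂ) : ℂ :=
  jacobiTheta₂ ζ (I * t) * jacobiTheta₂ (I * ζ) (I * t)

lemma hasSum_thetaG {t : ℝ} (ht : 0 < t) (ζ : ℂ) :
    HasSum (fun p : ℤ × ℤ => cexp (2 * Real.pi * I * ζ * lz p) * (Real.exp (-Real.pi * nq p * t) : ℂ))
      (thetaG t ζ) := by
  have him : 0 < (I * (t : ℂ)).im := by simpa using ht
  have h1 := hasSum_jacobiTheta₂_term ζ him
  have h2 := hasSum_jacobiTheta₂_term (I * ζ) him
  have hs := summable_mul_of_summable_norm h1.summable.norm h2.summable.norm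
  unfold thetaG
  convert! h1.mul h2 hs using 2 with p
  unfold jacobiTheta₂_term
  rw [← Complex.exp_add, Complex.ofReal_exp, ← Complex.exp_add]
  congr 1
  unfold lz nq
  push_cast
  ring_nf
  simp only [I_sq]
  ring

/-- The Taylor coefficients of `thetaG t` at the origin are, up to constants, the theta series
`thetaK k t`. -/
lemma thetaG_series {t : ℝ} (ht : 0 < t) (ζ : ℂ) :
    HasSum (fun k : ℕ => ζ ^ k * ((2 * Real.pi * I) ^ k / k.factorial * thetaK k t)) (thetaG t ζ) := by
  set T : (ℤ × ℤ) × ℕ → ℂ := fun x => (2 * Real.pi * I * ζ * lz x.1) ^ x.2 / x.2.factorial *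
    (Real.exp (-Real.pi * nq x.1 * t) : ℂ) with hT
  have hnorm : ∀ p k, ‖T (p, k)‖ = (2 * Real.pi * ‖ζ‖ * ‖lz p‖) ^ k / k.factorial *
      Real.exp (-Real.pi * nq p * t) := by
    intro p k
    simp only [hT]
    rw [norm_mul, norm_div, norm_pow, Complex.norm_real, Real.norm_of_nonneg (Real.exp_pos _).le]
    simp [abs_of_pos Real.pi_pos]
  have hexp : ∀ x : ℝ, HasSum (fun k : ℕ => x ^ k / k.factorial) (Real.exp x) := fun x => by
    have := NormedSpace.expSeries_div_hasSum_exp (𝔸 := ℝ) x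
    rwa [← Real.exp_eq_exp_ℝ] at this
  have hexpc : ∀ x : ℂ, HasSum (fun k : ℕ => x ^ k / k.factorial) (cexp x) := fun x => by
    have := NormedSpace.expSeries_div_hasSum_exp (𝔸 := ℂ) x
    rwa [← Complex.exp_eq_exp_ℂ] at this
  have hsum : Summable T := by
    refine Summable.of_norm ?_
    refine (summable_prod_of_nonneg (fun _ => norm_nonneg _)).mpr ⟨fun p => ?_, ?_⟩
    · simp_rw [hnorm]
      exact (hexp (2 * Real.pi * ‖ζ‖ * ‖lz p‖)).summable.mul_right _
    · simp_rw [hnorm, tsum_mul_right, (hexp _).tsum_eq]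
      exact summable_exp_lz _ ht
  have h1 := hsum.hasSum
  have h2 : HasSum (fun p => cexp (2 * Real.pi * I * ζ * lz p) *
      (Real.exp (-Real.pi * nq p * t) : ℂ)) (∑' x, T x) :=
    h1.prod_fiberwise fun p => by
      simp only [hT]
      exact (hexpc (2 * Real.pi * I * ζ * lz p)).mul_right _
  have h3 := h2.unique (hasSum_thetaG ht ζ)
  rw [← h3]
  have h4 : HasSum (fun x : ℕ × (ℤ × ℤ) => T (x.2, x.1)) (∑' x, T x) :=
    (Equiv.prodComm ℕ (ℤ × ℤ)).hasSum_iff.mpr h1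
  refine h4.prod_fiberwise fun k => ?_
  have h5 := (hasSum_thetaK k ht).mul_left (ζ ^ k * ((2 * Real.pi * I) ^ k / k.factorial))
  rw [← mul_assoc]
  convert! h5 using 2 with p
  simp only [hT]
  rw [mul_pow, mul_pow]; ring

/-- From the functional equation of `jacobiTheta₂`: the Gaussian prefactors of the two theta functions
cancel, because `ζ² + (iζ)² = 0`. -/
lemma thetaG_fe {t : ℝ} (ht : 0 < t) (ζ : ℂ) :
    thetaG t ζ = 1 / t * thetaG (1 / t) (-I * ζ / t) := by
  have htc : (t : ℂ) ≠ 0 := by exact_mod_cast ht.ne'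
  unfold thetaG
  rw [jacobiTheta₂_functional_equation ζ, jacobiTheta₂_functional_equation (I * ζ)]
  have e1 : -I * (I * (t : ℂ)) = t := by rw [← mul_assoc]; simp
  have e2 : -1 / (I * (t : ℂ)) = I * ((1 / t : ℝ) : ℂ) := by
    push_cast; field_simp; simp
  have e3 : ζ / (I * t) = -I * ζ / t := by
    field_simp; simp
  have e4 : I * ζ / (I * t) = I * (-I * ζ / t) := by
    field_simp; simp
  have e5 : cexp (-Real.pi * I * ζ ^ 2 / (I * t)) * cexp (-Real.pi * I * (I * ζ) ^ 2 / (I * t)) = 1 := by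
    rw [← Complex.exp_add, ← Complex.exp_zero]
    congr 1
    rw [mul_pow, I_sq]; ring
  have e6 : 1 / (t : ℂ) ^ (1 / 2 : ℂ) * (1 / (t : ℂ) ^ (1 / 2 : ℂ)) = 1 / t := by
    rw [div_mul_div_comm, ← Complex.cpow_add _ _ htc]; norm_num
  rw [e1, e2, e3, e4]
  linear_combination (jacobiTheta₂ (-I * ζ / t) (I * ((1 / t : ℝ) : ℂ)) *
    jacobiTheta₂ (I * (-I * ζ / t)) (I * ((1 / t : ℝ) : ℂ))) * (e6 +
    1 / (t : ℂ) ^ (1 / 2 : ℂ) * (1 / (t : ℂ) ^ (1 / 2 : ℂ)) * e5)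

lemma coeff_unique {c d : ℕ → ℂ} {f : ℂ → ℂ} (hc : ∀ ζ, HasSum (fun k => ζ ^ k * c k) (f ζ))
    (hd : ∀ ζ, HasSum (fun k => ζ ^ k * d k) (f ζ)) (k : ℕ) : c k = d k := by
  have h : ∀ e : ℕ → ℂ, (∀ ζ, HasSum (fun k => ζ ^ k * e k) (f ζ)) →
      HasFPowerSeriesAt f (FormalMultilinearSeries.ofScalars ℂ e) 0 := fun e he => by
    rw [hasFPowerSeriesAt_iff]
    refine Filter.Eventually.of_forall fun z => ?_
    simpa using he z
  have := (h c hc).eq_formalMultilinearSeries (h d hd)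
  simpa using congr_arg (FormalMultilinearSeries.coeff · k) this

/-- Comparison of Taylor coefficients in `thetaG_fe`; the factor `(-i)^k` is `1` because `4 ∣ k`. -/
lemma thetaK_fe {k : ℕ} (hk : 4 ∣ k) {t : ℝ} (ht : 0 < t) :
    thetaK k (1 / t) = (t : ℂ) ^ (k + 1) * thetaK k t := by
  have htc : (t : ℂ) ≠ 0 := by exact_mod_cast ht.ne'
  have h1 := thetaG_series ht
  have h2 : ∀ ζ, HasSum (fun k : ℕ => ζ ^ k * (1 / t * (-I / t) ^ k *
      ((2 * Real.pi * I) ^ k / k.factorial * thetaK k (1 / t)))) (thetaG t ζ) := fun ζ => by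
    have := (thetaG_series (one_div_pos.mpr ht) (-I * ζ / t)).mul_left (1 / (t : ℂ))
    rw [← thetaG_fe ht] at this
    convert! this using 2 with k
    rw [mul_div_right_comm, mul_pow]; ring
  have h3 := coeff_unique h1 h2 k
  obtain ⟨j, rfl⟩ := hk
  have hI : (-I) ^ (4 * j) = 1 := by
    rw [pow_mul, show (-I) ^ 4 = 1 by rw [neg_pow, I_pow_four]; norm_num, one_pow]
  have hne : (2 * Real.pi * I : ℂ) ^ (4 * j) / (4 * j).factorial ≠ 0 := by
    refine div_ne_zero (pow_ne_zero _ ?_) (by exact_mod_cast (Nat.factorial_pos _).ne')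
    simp [Real.pi_ne_zero]
  rw [div_pow, hI] at h3
  have h4 : thetaK (4 * j) t = 1 / t * (1 / t ^ (4 * j)) * thetaK (4 * j) (1 / t) := by
    apply mul_left_cancel₀ hne
    rw [h3]; ring
  rw [h4, pow_succ]
  field_simp

end

/-! ### The functional-equation pair of a theta series -/

section

open Complex Metric Set Filter Topology MeasureTheory HurwitzZeta

lemma summable_nq_rpow {σ : ℝ} (hσ : 1 < σ) : Summable fun p : ℤ × ℤ => nq p ^ (-σ) := by
  have h1 := EisensteinSeries.summable_one_div_norm_rpow (k := 2 * σ) (by linarith)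
  have h2 : Summable fun p : ℤ × ℤ => ‖(![p.1, p.2] : Fin 2 → ℤ)‖ ^ (-(2 * σ)) :=
    h1.comp_injective (i := fun p : ℤ × ℤ => ![p.1, p.2]) fun p q hpq =>
      Prod.ext (by simpa using congrFun hpq 0) (by simpa using congrFun hpq 1)
  refine Summable.of_nonneg_of_le (fun p => Real.rpow_nonneg (nq_nonneg p) _) (fun p => ?_) h2
  by_cases hp : p = 0
  · subst hp
    simp [nq, Real.zero_rpow (show -σ ≠ 0 by linarith), Real.rpow_nonneg]
  set x : Fin 2 → ℤ := ![p.1, p.2] with hx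
  have hx0 : 0 < ‖x‖ := by
    rw [norm_pos_iff]
    intro h
    exact hp (Prod.ext (by simpa [hx] using congrFun h 0) (by simpa [hx] using congrFun h 1))
  have hle : ‖x‖ ≤ Real.sqrt (nq p) := by
    refine (pi_norm_le_iff_of_nonneg (Real.sqrt_nonneg _)).mpr fun i => ?_
    fin_cases i
    · refine Real.le_sqrt_of_sq_le ?_
      simp [hx, nq, Int.norm_eq_abs]; positivity
    · refine Real.le_sqrt_of_sq_le ?_
      simp [hx, nq, Int.norm_eq_abs]; positivity
  have hsq : ‖x‖ ^ 2 ≤ nq p := by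
    calc ‖x‖ ^ 2 ≤ (Real.sqrt (nq p)) ^ 2 := by gcongr
      _ = nq p := Real.sq_sqrt (nq_nonneg p)
  calc nq p ^ (-σ) ≤ (‖x‖ ^ 2) ^ (-σ) :=
        Real.rpow_le_rpow_of_nonpos (by positivity) hsq (by linarith)
    _ = ‖x‖ ^ (-(2 * σ)) := by
        rw [← Real.rpow_natCast, ← Real.rpow_mul hx0.le]; norm_num

/-- Coefficients of the theta series without its constant term. -/
noncomputable def thA (k : ℕ) (p : ℤ × ℤ) : ℂ := if p = 0 then 0 else lz p ^ k

lemma norm_thA_le (k : ℕ) (p : ℤ × ℤ) : ‖thA k p‖ ≤ ‖lz p‖ ^ k := by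
  unfold thA; split_ifs <;> simp

lemma hasSum_thetaK_sub (k : ℕ) {t : ℝ} (ht : 0 < t) :
    HasSum (fun p : ℤ × ℤ => thA k p * (Real.exp (-Real.pi * nq p * t) : ℂ))
      (thetaK k t - 0 ^ k) := by
  have h1 := (hasSum_thetaK k ht).sub (hasSum_ite_eq (0 : ℤ × ℤ) ((0 : ℂ) ^ k))
  convert! h1 using 2 with p
  unfold thA
  split_ifs with hp
  · subst hp; simp [lz, nq]
  · simp

lemma thetaK_decay (k : ℕ) :
    (fun t => thetaK k t - 0 ^ k) =O[atTop] fun t => Real.exp (-Real.pi * t) := by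
  have hs : Summable fun p => ‖thA k p‖ * Real.exp (-Real.pi * nq p * 1) :=
    Summable.of_nonneg_of_le (fun _ => by positivity)
      (fun p => mul_le_mul_of_nonneg_right (norm_thA_le k p) (Real.exp_pos _).le)
      (summable_pow_lz k one_pos)
  refine Asymptotics.IsBigO.of_bound
    (Real.exp Real.pi * ∑' p, ‖thA k p‖ * Real.exp (-Real.pi * nq p * 1)) ?_
  filter_upwards [eventually_ge_atTop 1] with t ht
  have h1 := hasSum_thetaK_sub k (t := t) (by linarith)
  rw [← h1.tsum_eq, Real.norm_of_nonneg (Real.exp_pos _).le]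
  have h2 : HasSum (fun p => Real.exp Real.pi * (‖thA k p‖ * Real.exp (-Real.pi * nq p * 1)) *
      Real.exp (-Real.pi * t)) _ := (hs.hasSum.mul_left _).mul_right _
  refine tsum_of_norm_bounded h2 fun p => ?_
  rw [norm_mul, Complex.norm_real, Real.norm_of_nonneg (Real.exp_pos _).le]
  by_cases hp : p = 0
  · simp [thA, hp]
  · have hn := one_le_nq hp
    have : Real.exp (-Real.pi * nq p * t) ≤
        Real.exp Real.pi * Real.exp (-Real.pi * nq p * 1) * Real.exp (-Real.pi * t) := by
      rw [← Real.exp_add, ← Real.exp_add]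
      apply Real.exp_le_exp.mpr
      nlinarith [mul_nonneg Real.pi_pos.le (mul_nonneg (sub_nonneg.mpr hn) (sub_nonneg.mpr ht))]
    calc _ ≤ ‖thA k p‖ * (Real.exp Real.pi * Real.exp (-Real.pi * nq p * 1) *
          Real.exp (-Real.pi * t)) := by gcongr
      _ = _ := by ring

lemma continuousOn_thetaK (k : ℕ) : ContinuousOn (thetaK k) (Ioi 0) := by
  intro t ht
  have ht' : 0 < t / 2 := half_pos ht
  have h : ContinuousOn (thetaK k) (Ioi (t / 2)) := by
    refine continuousOn_tsum (fun p => by fun_prop) (summable_pow_lz k ht') fun p x hx => ?_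
    rw [norm_thetaK_term]
    refine mul_le_mul_of_nonneg_left (Real.exp_le_exp.mpr ?_) (by positivity)
    have h1 : t / 2 ≤ x := le_of_lt hx
    have h2 := mul_nonneg Real.pi_pos.le (nq_nonneg p)
    nlinarith
  exact (h.continuousAt (Ioi_mem_nhds (by linarith))).continuousWithinAt

/-- The functional-equation pair of the theta series of weight `4 j + 1`. The constant term
`0 ^ (4 * j)` is `1` for `j = 0` and `0` otherwise. -/
noncomputable def thetaPair (j : ℕ) : WeakFEPair ℂ where
  f := thetaK (4 * j)
  g := thetaK (4 * j)
  k := 4 * j + 1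
  ε := 1
  f₀ := 0 ^ (4 * j)
  g₀ := 0 ^ (4 * j)
  hf_int := (continuousOn_thetaK _).locallyIntegrableOn measurableSet_Ioi
  hg_int := (continuousOn_thetaK _).locallyIntegrableOn measurableSet_Ioi
  hk := by positivity
  hε := one_ne_zero
  h_feq := fun x hx => by
    rw [thetaK_fe (dvd_mul_right 4 j) hx, one_mul, smul_eq_mul]
    congr 1
    rw [show (4 * (j : ℝ) + 1) = ((4 * j + 1 : ℕ) : ℝ) by push_cast; ring, Real.rpow_natCast]
    push_cast; ring
  hf_top := fun r => (thetaK_decay _).trans (isLittleO_exp_neg_mul_rpow_atTop Real.pi_pos r).isBigO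
  hg_top := fun r => (thetaK_decay _).trans (isLittleO_exp_neg_mul_rpow_atTop Real.pi_pos r).isBigO

lemma thetaPair_subGaussian (j : ℕ) : SubGaussian (thetaPair j).Λ₀ :=
  WeakFEPair_subGaussian _ Real.pi_pos Real.pi_pos (thetaK_decay _) (thetaK_decay _)

lemma thetaPair_fe (j : ℕ) (s : ℂ) :
    (thetaPair j).Λ (4 * j + 1 - s) = (thetaPair j).Λ s := by
  have h := (thetaPair j).functional_equation s
  have h2 : (thetaPair j).symm = thetaPair j := by
    simp [WeakFEPair.symm, thetaPair]
  rw [h2] at h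
  simpa [thetaPair] using h

lemma thetaPair_hasSum (j : ℕ) {s : ℂ} (hs : 4 * j + 1 < s.re) :
    HasSum (fun p => (Real.pi : ℂ) ^ (-s) * Complex.Gamma s * thA (4 * j) p / (nq p : ℂ) ^ s)
      ((thetaPair j).Λ s) := by
  have h1 := ((thetaPair j).hasMellin (s := s) (by simpa [thetaPair] using hs)).2
  rw [← h1]
  have hj : (0 : ℝ) ≤ j := Nat.cast_nonneg j
  refine hasSum_mellin_pi_mul (fun p => ?_) (by linarith) (fun t ht => hasSum_thetaK_sub _ ht) ?_
  · by_cases hp : p = 0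
    · left; simp [thA, hp]
    · right; linarith [one_le_nq hp]
  · refine Summable.of_nonneg_of_le (fun p => by have := nq_nonneg p; positivity) (fun p => ?_)
      (summable_nq_rpow (σ := s.re - 2 * j) (by linarith))
    by_cases hp : p = 0
    · simp [thA, hp, nq, Real.rpow_nonneg]
    · have hn : 0 < nq p := by linarith [one_le_nq hp]
      refine (div_le_div_of_nonneg_right (norm_thA_le _ p) (Real.rpow_nonneg hn.le _)).trans ?_
      rw [show 4 * j = 2 * (2 * j) by ring, pow_mul, norm_lz_sq, ← Real.rpow_natCast,
        ← Real.rpow_sub hn]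
      apply le_of_eq; congr 1; push_cast; ring

end

/-! ### Dirichlet series over the Gaussian integers -/

section

open Complex Metric Set Filter Topology MeasureTheory HurwitzZeta

/-- The norm of a Gaussian integer, as a real number. -/
noncomputable def gN (z : GaussianInt) : ℝ := (z.norm : ℝ)

lemma gN_mul (z w : GaussianInt) : gN (z * w) = gN z * gN w := by
  unfold gN; rw [Zsqrtd.norm_mul]; push_cast; ring

lemma gN_eq_nq (z : GaussianInt) : gN z = nq (z.re, z.im) := by
  simp [gN, nq, Zsqrtd.norm]; ring

lemma lz_eq (z : GaussianInt) : lz (z.re, z.im) = z.toComplex := by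
  rw [GaussianInt.toComplex_def, lz]

lemma gN_eq_norm_sq (z : GaussianInt) : gN z = ‖z.toComplex‖ ^ 2 := by
  rw [gN_eq_nq, ← lz_eq, norm_lz_sq]

lemma gN_nonneg (z : GaussianInt) : 0 ≤ gN z := by rw [gN_eq_norm_sq]; positivity

lemma one_le_gN {z : GaussianInt} (hz : z ≠ 0) : 1 ≤ gN z := by
  have := GaussianInt.norm_pos.mpr hz
  unfold gN; exact_mod_cast this

lemma gN_unit {z : GaussianInt} (hz : IsUnit z) : gN z = 1 := by
  unfold gN; rw [(Zsqrtd.norm_eq_one_iff' (by norm_num) z).mpr hz]; simp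

lemma two_le_gN {z : GaussianInt} (hz : z ≠ 0) (hu : ¬ IsUnit z) : 2 ≤ gN z := by
  have h1 := GaussianInt.norm_pos.mpr hz
  have h2 : z.norm ≠ 1 := fun h => hu ((Zsqrtd.norm_eq_one_iff' (by norm_num) z).mp h)
  have : (2 : ℤ) ≤ z.norm := by omega
  unfold gN; exact_mod_cast this

lemma gN_zero : gN 0 = 0 := by simp [gN]

/-- Gaussian integers as lattice points. -/
def gEquiv : GaussianInt ≃ ℤ × ℤ where
  toFun z := (z.re, z.im)
  invFun p := ⟨p.1, p.2⟩
  left_inv _ := rfl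
  right_inv _ := rfl

lemma summable_gN {σ : ℝ} (hσ : 1 < σ) : Summable fun z : GaussianInt => gN z ^ (-σ) := by
  simp_rw [gN_eq_nq]
  exact (gEquiv.summable_iff (f := fun p => nq p ^ (-σ))).mpr (summable_nq_rpow hσ)

lemma summable_log_gN {σ : ℝ} (hσ : 1 < σ) :
    Summable fun z : GaussianInt => Real.log (gN z) * gN z ^ (-σ) := by
  set δ : ℝ := (σ - 1) / 2 with hδ
  have hδ0 : 0 < δ := by rw [hδ]; linarith
  have h := (summable_gN (σ := σ - δ) (by rw [hδ]; linarith)).mul_left (1 / δ)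
  refine Summable.of_nonneg_of_le (fun z => ?_) (fun z => ?_) h
  · by_cases hz : z = 0
    · simp [hz, gN_zero]
    · exact mul_nonneg (Real.log_nonneg (one_le_gN hz)) (Real.rpow_nonneg (gN_nonneg z) _)
  · by_cases hz : z = 0
    · rw [hz, gN_zero]; simp only [Real.log_zero, zero_mul]
      exact mul_nonneg (by positivity) (Real.rpow_nonneg le_rfl _)
    · have h0 : 0 < gN z := by linarith [one_le_gN hz]
      have h1 := Real.log_le_rpow_div h0.le hδ0
      calc _ ≤ gN z ^ δ / δ * gN z ^ (-σ) := by gcongr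
        _ = 1 / δ * (gN z ^ δ * gN z ^ (-σ)) := by ring
        _ = _ := by rw [← Real.rpow_add h0]; congr 2; ring

/-- Dirichlet series over the Gaussian integers. -/
noncomputable def gD (a : GaussianInt → ℂ) (s : ℂ) : ℂ := ∑' z, a z * (gN z : ℂ) ^ (-s)

lemma gD_term_hasDerivAt {a : GaussianInt → ℂ} (ha0 : a 0 = 0) (z : GaussianInt) (s : ℂ) :
    HasDerivAt (fun s => a z * (gN z : ℂ) ^ (-s)) (-(Real.log (gN z) * (a z * (gN z : ℂ) ^ (-s)))) s := by
  by_cases hz : z = 0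
  · simp only [hz, ha0, zero_mul, mul_zero, neg_zero]
    exact hasDerivAt_const _ _
  · have h0 : 0 < gN z := by linarith [one_le_gN hz]
    have h1 : (gN z : ℂ) ≠ 0 := by exact_mod_cast h0.ne'
    refine (((hasDerivAt_id s).neg.const_cpow (Or.inl h1)).const_mul (a z)).congr_deriv ?_
    rw [Complex.ofReal_log h0.le]
    simp; ring

lemma norm_gD_term {a : GaussianInt → ℂ} (ha : ∀ z, ‖a z‖ ≤ 1) (ha0 : a 0 = 0)
    (s : ℂ) (z : GaussianInt) :
    ‖a z * (gN z : ℂ) ^ (-s)‖ ≤ gN z ^ (-s.re) := by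
  by_cases hz : z = 0
  · rw [hz, ha0, gN_zero]; simp [Real.rpow_nonneg]
  · have h0 : 0 < gN z := by linarith [one_le_gN hz]
    rw [norm_mul, Complex.norm_cpow_eq_rpow_re_of_pos h0, neg_re]
    exact mul_le_of_le_one_left (Real.rpow_nonneg h0.le _) (ha z)

lemma hasSum_gD {a : GaussianInt → ℂ} (ha : ∀ z, ‖a z‖ ≤ 1) (ha0 : a 0 = 0)
    {s : ℂ} (hs : 1 < s.re) :
    HasSum (fun z => a z * (gN z : ℂ) ^ (-s)) (gD a s) :=
  (Summable.of_norm (Summable.of_nonneg_of_le (fun _ => norm_nonneg _)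
    (norm_gD_term ha ha0 s) (summable_gN hs))).hasSum

lemma gD_aux {a : GaussianInt → ℂ} (ha : ∀ z, ‖a z‖ ≤ 1) (ha0 : a 0 = 0)
    {σ : ℝ} (hσ : 1 < σ) :
    DifferentiableOn ℂ (gD a) {s : ℂ | σ < s.re} ∧ ∀ s : ℂ, σ < s.re →
      HasSum (fun z => -(Real.log (gN z) * (a z * (gN z : ℂ) ^ (-s)))) (deriv (gD a) s) := by
  have hU : IsOpen {s : ℂ | σ < s.re} := isOpen_lt continuous_const continuous_re
  have hd : ∀ z, DifferentiableOn ℂ (fun s => a z * (gN z : ℂ) ^ (-s)) {s : ℂ | σ < s.re} := fun z s _ =>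
    (gD_term_hasDerivAt ha0 z s).differentiableAt.differentiableWithinAt
  have hb : ∀ (z : GaussianInt) (w : ℂ), w ∈ {s : ℂ | σ < s.re} →
      ‖a z * (gN z : ℂ) ^ (-w)‖ ≤ gN z ^ (-σ) := fun z w hw => by
    refine (norm_gD_term ha ha0 w z).trans ?_
    by_cases hz : z = 0
    · have : -σ ≠ 0 := by linarith
      have h2 : -w.re ≠ 0 := by have h3 : σ < w.re := hw; linarith
      simp [hz, gN_zero, Real.zero_rpow this, Real.zero_rpow h2]
    · exact Real.rpow_le_rpow_of_exponent_le (one_le_gN hz) (neg_le_neg (le_of_lt hw))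
  refine ⟨differentiableOn_tsum_of_summable_norm (summable_gN hσ) hd hU hb, fun s hs => ?_⟩
  have := hasSum_deriv_of_summable_norm (summable_gN hσ) hd hU hb hs
  simp only [(gD_term_hasDerivAt ha0 _ s).deriv] at this
  exact this

lemma gD_differentiableAt {a : GaussianInt → ℂ} (ha : ∀ z, ‖a z‖ ≤ 1) (ha0 : a 0 = 0)
    {s : ℂ} (hs : 1 < s.re) : DifferentiableAt ℂ (gD a) s := by
  obtain ⟨σ, h1, h2⟩ := exists_between hs
  exact (gD_aux ha ha0 h1).1.differentiableAt
    ((isOpen_lt continuous_const continuous_re).mem_nhds h2)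

lemma hasSum_deriv_gD {a : GaussianInt → ℂ} (ha : ∀ z, ‖a z‖ ≤ 1) (ha0 : a 0 = 0)
    {s : ℂ} (hs : 1 < s.re) :
    HasSum (fun z => -(Real.log (gN z) * (a z * (gN z : ℂ) ^ (-s)))) (deriv (gD a) s) := by
  obtain ⟨σ, h1, h2⟩ := exists_between hs
  exact (gD_aux ha ha0 h1).2 s h2

end

/-! ### Euler products over the Gaussian integers -/

section

open Complex Metric Set Filter Topology MeasureTheory HurwitzZeta

/-- Prime elements of the Gaussian integers. -/
abbrev GPrime := {p : GaussianInt // Prime p}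

lemma finite_gUnits : Finite GaussianIntˣ := by
  by_contra h
  rw [not_finite_iff_infinite] at h
  have h1 : Summable fun u : GaussianIntˣ => gN (u : GaussianInt) ^ (-(2 : ℝ)) :=
    (summable_gN (σ := 2) (by norm_num)).comp_injective Units.val_injective
  simp only [gN_unit (Units.isUnit _), Real.one_rpow] at h1
  exact one_ne_zero ((summable_const_iff (1 : ℝ)).mp h1)

/-- The number of Gaussian units, as a real number. -/
noncomputable def gC : ℝ := (Nat.card GaussianIntˣ : ℝ)

lemma gC_pos : 0 < gC := by
  have := finite_gUnits
  unfold gC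
  exact_mod_cast Nat.card_pos

/-- The primes dividing a prime `q` are its associates, one for each unit; hence the factor `gC`. -/
lemma hasSum_multiplicity_prime {q : GaussianInt} (hq : Prime q) :
    HasSum (fun p : GPrime => (multiplicity p.1 q : ℝ) * Real.log (gN p.1))
      (gC * Real.log (gN q)) := by
  have := finite_gUnits
  have := Fintype.ofFinite GaussianIntˣ
  set i : GaussianIntˣ → GPrime := fun u => ⟨q * u, ((associated_mul_unit_right q u u.isUnit).prime_iff).mp hq⟩ with hi
  have hinj : Function.Injective i := fun u v huv => by
    have : q * (u : GaussianInt) = q * v := congrArg Subtype.val huv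
    exact Units.ext (mul_left_cancel₀ hq.ne_zero this)
  refine (hinj.hasSum_iff fun p hp => ?_).mp ?_
  · have : multiplicity p.1 q = 0 := by
      rw [multiplicity_eq_zero]
      intro hdvd
      obtain ⟨u, hu⟩ := (p.2.associated_of_dvd hq hdvd).symm
      exact hp ⟨u, Subtype.ext hu⟩
    simp [this]
  · have h1 : ∀ u : GaussianIntˣ, ((fun p : GPrime => (multiplicity p.1 q : ℝ) * Real.log (gN p.1)) ∘ i) u
        = Real.log (gN q) := fun u => by
      have h2 : multiplicity (q * (u : GaussianInt)) q = 1 := by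
        rw [multiplicity_eq_of_associated_left (associated_mul_unit_right q u u.isUnit), multiplicity_self]
      simp only [Function.comp, hi]
      rw [h2, gN_mul, gN_unit u.isUnit]
      simp
    rw [funext h1]
    have := hasSum_fintype (fun _ : GaussianIntˣ => Real.log (gN q))
    convert! this using 1
    simp [gC, Nat.card_eq_fintype_card]

/-- Unique factorization in logarithmic form. Each prime is counted together with its associates. -/
lemma hasSum_multiplicity (z : GaussianInt) (hz : z ≠ 0) :
    HasSum (fun p : GPrime => (multiplicity p.1 z : ℝ) * Real.log (gN p.1))
      (gC * Real.log (gN z)) := by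
  induction z using UniqueFactorizationMonoid.induction_on_prime with
  | h₁ => exact absurd rfl hz
  | h₂ x hx =>
    have : ∀ p : GPrime, multiplicity p.1 x = 0 := fun p => multiplicity_of_isUnit_right p.2.not_isUnit hx
    simp only [this, gN_unit hx]
    simp
  | h₃ x q hx hq ih =>
    have h := (hasSum_multiplicity_prime hq).add (ih hx)
    rw [gN_mul, Real.log_mul (by linarith [one_le_gN hq.ne_zero]) (by linarith [one_le_gN hx]), mul_add]
    convert! h using 2 with p
    rw [multiplicity_mul p.2 (FiniteMultiplicity.of_prime_left p.2 hz)]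
    push_cast; ring

open Classical in
/-- The identity `∑ Λ = log` over the Gaussian integers: summing `log N p` over all prime powers
dividing `z` gives `log N z`, up to the number of units. -/
lemma hasSum_vonMangoldt (z : GaussianInt) (hz : z ≠ 0) :
    HasSum (fun x : GPrime × ℕ => if x.1.1 ^ (x.2 + 1) ∣ z then Real.log (gN x.1.1) else 0)
      (gC * Real.log (gN z)) := by
  have hlog : ∀ p : GPrime, 0 ≤ Real.log (gN p.1) := fun p => Real.log_nonneg (one_le_gN p.2.ne_zero)
  have hfib : ∀ p : GPrime, HasSum (fun k : ℕ => if p.1 ^ (k + 1) ∣ z then Real.log (gN p.1) else 0)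
      ((multiplicity p.1 z : ℝ) * Real.log (gN p.1)) := fun p => by
    have hf := FiniteMultiplicity.of_prime_left p.2 hz
    simp_rw [hf.pow_dvd_iff_le_multiplicity, Nat.succ_le_iff]
    have h := hasSum_sum_of_ne_finset_zero (L := SummationFilter.unconditional ℕ)
      (f := fun k => if k < multiplicity p.1 z then Real.log (gN p.1) else 0)
      (s := Finset.range (multiplicity p.1 z)) (fun b hb => by
        simp only [Finset.mem_range] at hb; simp [hb])
    convert! h using 1
    rw [Finset.sum_congr rfl (fun k hk => if_pos (Finset.mem_range.mp hk))]
    simp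
  have hs : Summable (fun x : GPrime × ℕ => if x.1.1 ^ (x.2 + 1) ∣ z then Real.log (gN x.1.1) else 0) := by
    refine (summable_prod_of_nonneg fun x => ?_).mpr ⟨fun p => (hfib p).summable, ?_⟩
    · dsimp only
      split_ifs
      exacts [hlog _, le_rfl]
    · simp only [(hfib _).tsum_eq]
      exact (hasSum_multiplicity z hz).summable
  have := hs.hasSum.prod_fiberwise hfib
  rw [← this.unique (hasSum_multiplicity z hz)]
  exact hs.hasSum

/-- Logarithmic derivative of an Euler product over the Gaussian integers, in summed form. -/
lemma euler_logDeriv {g : GaussianInt → ℂ} (hmul : ∀ x y, g (x * y) = g x * g y) (h0 : g 0 = 0)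
    (h1 : g 1 = 1)
    (hs : Summable fun z => ‖g z‖) (hl : Summable fun z => Real.log (gN z) * ‖g z‖)
    (hh : ∀ p : GPrime, ‖g p.1‖ ≤ 1 / 2) :
    (Summable fun x : GPrime × ℕ => (Real.log (gN x.1.1) : ℂ) * g x.1.1 ^ (x.2 + 1)) ∧
    HasSum (fun z => (gC : ℂ) * Real.log (gN z) * g z)
      ((∑' x : GPrime × ℕ, (Real.log (gN x.1.1) : ℂ) * g x.1.1 ^ (x.2 + 1)) * ∑' z, g z) := by
  classical
  have hlog : ∀ p : GPrime, 0 ≤ Real.log (gN p.1) := fun p => Real.log_nonneg (one_le_gN p.2.ne_zero)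
  have hpow : ∀ z k, g (z ^ k) = g z ^ k := fun z k => by
    induction k with
    | zero => simp [h1]
    | succ k ih => rw [pow_succ, hmul, ih, pow_succ]
  have hA : Summable fun x : GPrime × ℕ => ‖(Real.log (gN x.1.1) : ℂ) * g x.1.1 ^ (x.2 + 1)‖ := by
    have h3 : Summable fun p : GPrime => Real.log (gN p.1) * ‖g p.1‖ :=
      hl.comp_injective Subtype.val_injective
    have h4 := h3.mul_of_nonneg (summable_geometric_of_lt_one (r := 1 / 2) (by norm_num) (by norm_num))
      (fun p => mul_nonneg (hlog p) (norm_nonneg _)) (fun _ => by positivity)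
    refine Summable.of_nonneg_of_le (fun _ => norm_nonneg _) (fun x => ?_) h4
    rw [norm_mul, norm_pow, Complex.norm_real, Real.norm_of_nonneg (hlog _), pow_succ', ← mul_assoc]
    refine mul_le_mul_of_nonneg_left ?_ (mul_nonneg (hlog _) (norm_nonneg _))
    exact pow_le_pow_left₀ (norm_nonneg _) (hh _) _
  refine ⟨Summable.of_norm hA, ?_⟩
  have hA' := (Summable.of_norm hA).hasSum
  have hs' := (Summable.of_norm hs).hasSum
  set W : GPrime × ℕ → ℂ := fun x => (Real.log (gN x.1.1) : ℂ) * g x.1.1 ^ (x.2 + 1) with hW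
  have hB : HasSum (fun y : (GPrime × ℕ) × GaussianInt => W y.1 * g y.2) ((∑' x, W x) * ∑' z, g z) :=
    hA'.mul hs' (summable_mul_of_summable_norm hA hs)
  set T : (GPrime × ℕ) × GaussianInt → ℂ := fun y =>
    if y.1.1.1 ^ (y.1.2 + 1) ∣ y.2 then (Real.log (gN y.1.1.1) : ℂ) * g y.2 else 0 with hT
  -- Regroup the product by the value `z = p ^ (k + 1) * v`.
  set i : (GPrime × ℕ) × GaussianInt → (GPrime × ℕ) × GaussianInt :=
    fun y => (y.1, y.1.1.1 ^ (y.1.2 + 1) * y.2) with hi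
  have hinj : Function.Injective i := fun y y' h => by
    have e1 : y.1 = y'.1 := by simpa [hi] using congrArg Prod.fst h
    have e2 : y.1.1.1 ^ (y.1.2 + 1) * y.2 = y'.1.1.1 ^ (y'.1.2 + 1) * y'.2 := by
      simpa only [hi] using congrArg Prod.snd h
    rw [← e1] at e2
    exact Prod.ext e1 (mul_left_cancel₀ (pow_ne_zero _ y.1.1.2.ne_zero) e2)
  have hC : HasSum T ((∑' x, W x) * ∑' z, g z) := by
    refine (hinj.hasSum_iff fun y hy => ?_).mp ?_
    · simp only [hT]
      rw [if_neg]
      rintro ⟨v, hv⟩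
      exact hy ⟨(y.1, v), Prod.ext rfl hv.symm⟩
    · have hE : T ∘ i = fun y : (GPrime × ℕ) × GaussianInt => W y.1 * g y.2 := by
        funext y
        simp only [hT, hi, hW, Function.comp]
        rw [if_pos (dvd_mul_right _ _), hmul, hpow, mul_assoc]
      rw [hE]
      exact hB
  have hD := ((Equiv.prodComm GaussianInt (GPrime × ℕ)).hasSum_iff.mpr hC)
  refine hD.prod_fiberwise fun z => ?_
  simp only [Function.comp, Equiv.prodComm_apply, Prod.swap_prod_mk, hT]
  by_cases hz : z = 0
  · simp only [hz, h0, mul_zero, ite_self]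
    exact hasSum_zero
  · have := (Complex.hasSum_ofReal.mpr (hasSum_vonMangoldt z hz)).mul_right (g z)
    convert! this using 2 with x
    · split_ifs <;> simp
    · push_cast; ring

end

/-! ### Angular characters and the `3-4-1` inequality -/

section

open Complex Metric Set Filter Topology MeasureTheory HurwitzZeta

/-- The angular character `z ↦ e^{4 i j arg z}` on Gaussian integers, extended by `0` at `0`. -/
noncomputable def gPsi (j : ℕ) (z : GaussianInt) : ℂ :=
  if z = 0 then 0 else (z.toComplex / ‖z.toComplex‖) ^ (4 * j)

lemma gPsi_zero (j : ℕ) : gPsi j 0 = 0 := by simp [gPsi]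

lemma gPsi_one (j : ℕ) : gPsi j 1 = 1 := by simp [gPsi]

lemma gPsi_mul (j : ℕ) (z w : GaussianInt) : gPsi j (z * w) = gPsi j z * gPsi j w := by
  unfold gPsi
  by_cases hz : z = 0
  · simp [hz]
  by_cases hw : w = 0
  · simp [hw]
  rw [if_neg hz, if_neg hw, if_neg (mul_ne_zero hz hw), ← mul_pow]
  congr 1
  rw [GaussianInt.toComplex_mul, norm_mul]
  push_cast
  rw [mul_div_mul_comm]

lemma norm_gPsi_of_ne_zero (j : ℕ) {z : GaussianInt} (hz : z ≠ 0) : ‖gPsi j z‖ = 1 := by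
  have : ‖z.toComplex‖ ≠ 0 := norm_ne_zero_iff.mpr (by simpa using hz)
  rw [gPsi, if_neg hz, norm_pow, norm_div, Complex.norm_real, norm_norm, div_self this, one_pow]

lemma norm_gPsi_le (j : ℕ) (z : GaussianInt) : ‖gPsi j z‖ ≤ 1 := by
  by_cases hz : z = 0
  · simp [hz, gPsi_zero]
  · exact (norm_gPsi_of_ne_zero j hz).le

lemma gPsi_two_mul (j : ℕ) (z : GaussianInt) : gPsi (2 * j) z = gPsi j z ^ 2 := by
  unfold gPsi
  split_ifs
  · simp
  · rw [← pow_mul]; congr 1; ring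

lemma gPsi_unit (j : ℕ) {z : GaussianInt} (hz : IsUnit z) : gPsi j z = 1 := by
  have h1 : z.norm = 1 := (Zsqrtd.norm_eq_one_iff' (by norm_num) z).mpr hz
  have h4 : z.toComplex ^ 4 = 1 := by
    have e : z.re * z.re + z.im * z.im = 1 := by
      have := h1; simp [Zsqrtd.norm] at this; exact this
    have h2 : z.re = 0 ∨ z.im = 0 := by
      by_contra h
      push Not at h
      have := mul_self_pos.mpr h.1
      have := mul_self_pos.mpr h.2
      omega
    rw [GaussianInt.toComplex_def]
    have ec : (z.re : ℂ) * z.re + z.im * z.im = 1 := by exact_mod_cast e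
    rcases h2 with h | h
    · rw [h] at ec ⊢
      simp only [Int.cast_zero, zero_mul, zero_add] at ec ⊢
      rw [mul_pow, I_pow_four]
      linear_combination ((z.im : ℂ) * z.im + 1) * ec
    · rw [h] at ec ⊢
      simp only [Int.cast_zero, zero_mul, add_zero] at ec ⊢
      linear_combination ((z.re : ℂ) * z.re + 1) * ec
  have hn : ‖z.toComplex‖ = 1 := by
    have h2 := gN_eq_norm_sq z
    rw [gN_unit hz] at h2
    nlinarith [norm_nonneg z.toComplex]
  rw [gPsi, if_neg hz.ne_zero, hn, pow_mul]
  simp [h4]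

/-- Summand of the Euler product `- L' / L` of `gPsi j`. -/
noncomputable def gS (j : ℕ) (s : ℂ) (x : GPrime × ℕ) : ℂ :=
  (Real.log (gN x.1.1) : ℂ) * (gPsi j x.1.1 * (gN x.1.1 : ℂ) ^ (-s)) ^ (x.2 + 1)

/-- `-L'/L` is a sum over prime powers. Since primes are counted together with their associates, the
factor `gC` appears. -/
lemma gD_logDeriv (j : ℕ) {s : ℂ} (hs : 1 < s.re) :
    Summable (gS j s) ∧
      (gC : ℂ) * deriv (gD (gPsi j)) s = -((∑' x, gS j s x) * gD (gPsi j) s) := by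
  have hterm := norm_gD_term (norm_gPsi_le j) (gPsi_zero j) s
  have hpos : ∀ z : GaussianInt, z ≠ 0 → 0 < gN z := fun z hz => by linarith [one_le_gN hz]
  have h := euler_logDeriv (g := fun z => gPsi j z * (gN z : ℂ) ^ (-s)) (fun x y => by
      rw [gPsi_mul, gN_mul, Complex.ofReal_mul,
        Complex.mul_cpow_ofReal_nonneg (gN_nonneg x) (gN_nonneg y)]
      ring) (by simp [gPsi_zero]) (by simp [gPsi_one, gN_unit isUnit_one])
    (Summable.of_nonneg_of_le (fun _ => norm_nonneg _) hterm (summable_gN hs))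
    (by
      refine Summable.of_nonneg_of_le (fun z => ?_) (fun z => ?_) (summable_log_gN hs)
      · by_cases hz : z = 0
        · simp [hz, gN_zero]
        · exact mul_nonneg (Real.log_nonneg (one_le_gN hz)) (norm_nonneg _)
      · by_cases hz : z = 0
        · simp [hz, gN_zero]
        · exact mul_le_mul_of_nonneg_left (hterm z) (Real.log_nonneg (one_le_gN hz)))
    (fun p => by
      refine (hterm p.1).trans ?_
      have h2 := two_le_gN p.2.ne_zero p.2.not_isUnit
      calc gN p.1 ^ (-s.re) ≤ gN p.1 ^ (-1 : ℝ) :=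
            Real.rpow_le_rpow_of_exponent_le (by linarith) (by linarith)
        _ = (gN p.1)⁻¹ := Real.rpow_neg_one _
        _ ≤ 1 / 2 := by rw [one_div]; exact inv_anti₀ (by norm_num) h2)
  refine ⟨h.1, ?_⟩
  have h3 := (hasSum_deriv_gD (norm_gPsi_le j) (gPsi_zero j) hs).mul_left (gC : ℂ)
  have h4 := h.2.neg
  refine h3.unique ?_
  convert! h4 using 2 with z
  ring

/-- The `3-4-1` inequality, valid on the closed unit disc. -/
lemma three_four_one {z : ℂ} (hz : ‖z‖ ≤ 1) : 0 ≤ (3 + 4 * z + z ^ 2).re := by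
  have h1 : z.re ^ 2 + z.im ^ 2 ≤ 1 := by
    have := Complex.sq_norm z
    rw [Complex.normSq_apply] at this
    nlinarith [norm_nonneg z]
  have h2 : (3 + 4 * z + z ^ 2).re = 3 + 4 * z.re + (z.re ^ 2 - z.im ^ 2) := by
    simp [pow_two]
  rw [h2]
  nlinarith [sq_nonneg (z.re + 1)]

/-- The terms belonging to a prime power combine to `r (3 + 4z + z²)` with `r ≥ 0` and `|z| ≤ 1`. -/
lemma gS_inequality (j : ℕ) {x : ℝ} (hx : 1 < x) {w : ℂ} (hw : 0 ≤ w.re) :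
    0 ≤ (3 * ∑' y, gS 0 x y + 4 * ∑' y, gS j (x + w) y + ∑' y, gS (2 * j) (x + 2 * w) y).re := by
  have h0 := (gD_logDeriv 0 (s := x) (by simpa using hx)).1.hasSum
  have h1 := (gD_logDeriv j (s := x + w) (by simp; linarith)).1.hasSum
  have h2 := (gD_logDeriv (2 * j) (s := x + 2 * w) (by simp; linarith)).1.hasSum
  have h := Complex.hasSum_re (((h0.mul_left 3).add (h1.mul_left 4)).add h2)
  refine h.nonneg fun y => ?_
  obtain ⟨p, k⟩ := y
  have hp := p.2.ne_zero
  have hN : 0 < gN p.1 := by linarith [one_le_gN hp]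
  have hNc : (gN p.1 : ℂ) ≠ 0 := by exact_mod_cast hN.ne'
  set z : ℂ := (gPsi j p.1 * (gN p.1 : ℂ) ^ (-w)) ^ (k + 1) with hz
  have hz1 : ‖z‖ ≤ 1 := by
    rw [hz, norm_pow, norm_mul, Complex.norm_cpow_eq_rpow_re_of_pos hN]
    refine pow_le_one₀ (by positivity) (mul_le_one₀ (norm_gPsi_le _ _) (by positivity) ?_)
    exact Real.rpow_le_one_of_one_le_of_nonpos (one_le_gN hp) (by simpa using hw)
  set r : ℝ := Real.log (gN p.1) * (gN p.1 ^ (-x)) ^ (k + 1) with hr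
  have hr0 : 0 ≤ r := mul_nonneg (Real.log_nonneg (one_le_gN hp)) (by positivity)
  have e0 : gS 0 x (p, k) = r := by
    simp only [gS, hr]
    rw [gPsi, if_neg hp]
    push_cast
    rw [Complex.ofReal_cpow hN.le]
    simp
  have e1 : gS j (x + w) (p, k) = r * z := by
    simp only [gS, hr, hz]
    rw [neg_add, Complex.cpow_add _ _ hNc]
    push_cast
    rw [Complex.ofReal_cpow hN.le]
    push_cast
    simp only [mul_pow]
    ring
  have e2 : gS (2 * j) (x + 2 * w) (p, k) = r * z ^ 2 := by
    simp only [gS, hr, hz]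
    rw [gPsi_two_mul, neg_add, Complex.cpow_add _ _ hNc,
      show -(2 * w) = -w + -w by ring, Complex.cpow_add _ _ hNc]
    push_cast
    rw [Complex.ofReal_cpow hN.le]
    push_cast
    simp only [mul_pow]
    ring
  rw [e0, e1, e2, show 3 * (r : ℂ) + 4 * (r * z) + r * z ^ 2 = r * (3 + 4 * z + z ^ 2) by ring,
    Complex.re_ofReal_mul]
  exact mul_nonneg hr0 (three_four_one hz1)

/-- The Dirichlet series of an angular character does not vanish identically. -/
lemma gD_ne_zero (j : ℕ) : ∃ σ : ℝ, 1 < σ ∧ gD (gPsi j) σ ≠ 0 := by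
  classical
  by_contra hcon
  push Not at hcon
  set ind : GaussianInt → ℂ := fun z => if IsUnit z then 1 else 0 with hind
  have hlim : Tendsto (fun σ : ℝ => ∑' z, gPsi j z * (gN z : ℂ) ^ (-(σ : ℂ))) atTop
      (𝓝 (∑' z : GaussianInt, ind z)) := by
    simp only [hind]
    refine tendsto_tsum_of_dominated_convergence (summable_gN (σ := 2) (by norm_num)) (fun z => ?_) ?_
    · by_cases hz : z = 0
      · simp [hz, gPsi_zero]
      by_cases hu : IsUnit z
      · simp only [if_pos hu, gN_unit hu, gPsi_unit j hu]
        simp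
      · rw [if_neg hu]
        have h2 := two_le_gN hz hu
        refine tendsto_zero_iff_norm_tendsto_zero.mpr ?_
        have h3 : ∀ σ : ℝ, ‖gPsi j z * (gN z : ℂ) ^ (-(σ : ℂ))‖ = gN z ^ (-σ) := fun σ => by
          rw [norm_mul, norm_gPsi_of_ne_zero j hz, one_mul,
            Complex.norm_cpow_eq_rpow_re_of_pos (by linarith)]
          simp
        simp_rw [h3]
        exact (tendsto_rpow_atBot_of_base_gt_one _ (by linarith)).comp tendsto_neg_atTop_atBot
    · filter_upwards [eventually_ge_atTop 2] with σ hσ z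
      refine (norm_gD_term (norm_gPsi_le j) (gPsi_zero j) _ z).trans ?_
      by_cases hz : z = 0
      · rw [hz, gN_zero, Real.zero_rpow (by simp; linarith), Real.zero_rpow (by norm_num)]
      · exact Real.rpow_le_rpow_of_exponent_le (one_le_gN hz) (by simp; linarith)
  have hzero : Tendsto (fun σ : ℝ => ∑' z, gPsi j z * (gN z : ℂ) ^ (-(σ : ℂ))) atTop (𝓝 0) := by
    refine tendsto_const_nhds.congr' ?_
    filter_upwards [eventually_gt_atTop 1] with σ hσ
    exact (hcon σ hσ).symm
  have huniq := tendsto_nhds_unique hlim hzero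
  have hfin := finite_gUnits
  have hft := Fintype.ofFinite GaussianIntˣ
  have hsum : HasSum ind
      (∑ _u : GaussianIntˣ, (1 : ℂ)) := by
    refine (Function.Injective.hasSum_iff (Units.val_injective (α := GaussianInt)) fun z hz => ?_).mp ?_
    · simp only [hind]
      rw [if_neg]
      rintro ⟨u, hu⟩
      exact hz ⟨u, hu⟩
    · convert! hasSum_fintype (fun _ : GaussianIntˣ => (1 : ℂ)) using 2 with u
      simp [hind]
  rw [hsum.tsum_eq] at huniq
  simp at huniq

end

/-! ### Continuation, and non-vanishing on `Re s ≥ 1` -/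

section

open Complex Metric Set Filter Topology MeasureTheory HurwitzZeta

/-- The continuation, by the theta functional equation, of the Dirichlet series of `gPsi j`. It is
entire for `j ≥ 1`; for `j = 0` there is a pole at `1`, where the value is junk. -/
noncomputable def gL (j : ℕ) (s : ℂ) : ℂ :=
  (Real.pi : ℂ) ^ (s + 2 * j) * (Complex.Gamma (s + 2 * j))⁻¹ * (thetaPair j).Λ (s + 2 * j)

lemma thA_eq (j : ℕ) (z : GaussianInt) (s : ℂ) :
    thA (4 * j) (z.re, z.im) / (nq (z.re, z.im) : ℂ) ^ (s + 2 * j) =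
      gPsi j z * (gN z : ℂ) ^ (-s) := by
  by_cases hz : z = 0
  · subst hz; simp [thA, gPsi_zero]
  have hz' : (z.re, z.im) ≠ (0 : ℤ × ℤ) := fun h => hz (gEquiv.injective h)
  have hn : ((‖z.toComplex‖ : ℝ) : ℂ) ≠ 0 := by
    exact_mod_cast norm_ne_zero_iff.mpr (by simpa using hz)
  have hN : (gN z : ℂ) ≠ 0 := by
    have := one_le_gN hz; exact_mod_cast (by linarith : gN z ≠ 0)
  rw [thA, if_neg hz', lz_eq, ← gN_eq_nq, gPsi, if_neg hz, Complex.cpow_add _ _ hN,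
    show (2 * (j : ℂ)) = ((2 * j : ℕ) : ℂ) by push_cast; ring, Complex.cpow_natCast, Complex.cpow_neg,
    div_pow]
  have e : (gN z : ℂ) ^ (2 * j) = (‖z.toComplex‖ : ℂ) ^ (4 * j) := by
    rw [gN_eq_norm_sq]; push_cast; rw [← pow_mul]; congr 1; ring
  rw [e]
  have : (gN z : ℂ) ^ s ≠ 0 := by simp [Complex.cpow_eq_zero_iff, hN]
  field_simp

lemma gL_eq_of_large (j : ℕ) {s : ℂ} (hs : 2 * j + 1 < s.re) : gL j s = gD (gPsi j) s := by
  have hj : (0 : ℝ) ≤ j := Nat.cast_nonneg j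
  have h1 := thetaPair_hasSum j (s := s + 2 * j) (by simp; linarith)
  have hG : Complex.Gamma (s + 2 * j) ≠ 0 := Complex.Gamma_ne_zero_of_re_pos (by simp; linarith)
  have h2 := h1.mul_left ((Real.pi : ℂ) ^ (s + 2 * j) * (Complex.Gamma (s + 2 * j))⁻¹)
  have h3 := (gEquiv.hasSum_iff.mpr h2)
  refine h3.unique ?_
  convert! hasSum_gD (norm_gPsi_le j) (gPsi_zero j) (s := s) (by linarith) using 2 with z
  rw [← thA_eq]
  simp only [Function.comp, gEquiv, Equiv.coe_fn_mk]
  rw [Complex.cpow_neg]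
  have hpi : (Real.pi : ℂ) ^ (s + 2 * j) ≠ 0 := by
    simp [Complex.cpow_eq_zero_iff, Real.pi_ne_zero]
  field_simp

lemma differentiable_thetaLambda {j : ℕ} (hj : 1 ≤ j) : Differentiable ℂ (thetaPair j).Λ := fun s => by
  have : 4 * j ≠ 0 := by omega
  refine (thetaPair j).differentiableAt_Λ (Or.inr ?_) (Or.inr ?_) <;> (simp [thetaPair]; omega)

lemma thetaLambda_subGaussian {j : ℕ} (hj : 1 ≤ j) : SubGaussian (thetaPair j).Λ := by
  have : (thetaPair j).Λ = (thetaPair j).Λ₀ := by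
    funext s
    have h := (thetaPair j).Λ₀_eq s
    have e : (0 : ℂ) ^ (4 * j) = 0 := zero_pow (by omega)
    simpa [thetaPair, e] using h.symm
  rw [this]
  exact thetaPair_subGaussian j

lemma differentiable_gL {j : ℕ} (hj : 1 ≤ j) : Differentiable ℂ (gL j) := by
  unfold gL
  have h1 : Differentiable ℂ fun s : ℂ => s + 2 * (j : ℂ) := by fun_prop
  refine Differentiable.mul (Differentiable.mul ?_ ?_) ((differentiable_thetaLambda hj).comp h1)
  · exact fun s => ((h1 s).const_cpow (Or.inl (by exact_mod_cast Real.pi_ne_zero)))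
  · exact Complex.differentiable_one_div_Gamma.comp h1

/-- Two functions holomorphic on `Re s > 1` that agree far to the right agree on `Re s > 1`. -/
lemma eqOn_halfPlane {f g : ℂ → ℂ} (hf : ∀ s : ℂ, 1 < s.re → DifferentiableAt ℂ f s)
    (hg : ∀ s : ℂ, 1 < s.re → DifferentiableAt ℂ g s) {σ : ℝ} (hσ : 1 ≤ σ)
    (h : ∀ s : ℂ, σ < s.re → f s = g s) {s : ℂ} (hs : 1 < s.re) : f s = g s := by
  have hU : IsOpen {s : ℂ | 1 < s.re} := isOpen_lt continuous_const continuous_re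
  have hf' : AnalyticOnNhd ℂ f {s : ℂ | 1 < s.re} :=
    DifferentiableOn.analyticOnNhd (fun s hs => (hf s hs).differentiableWithinAt) hU
  have hg' : AnalyticOnNhd ℂ g {s : ℂ | 1 < s.re} :=
    DifferentiableOn.analyticOnNhd (fun s hs => (hg s hs).differentiableWithinAt) hU
  have hc : IsPreconnected {s : ℂ | 1 < s.re} := (convex_halfSpace_re_gt 1).isPreconnected
  refine hf'.eqOn_of_preconnected_of_eventuallyEq hg' hc (z₀ := ((σ + 1 : ℝ) : ℂ)) ?_ ?_ hs
  · simp; linarith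
  · filter_upwards [(isOpen_lt continuous_const continuous_re).mem_nhds
      (show σ < (((σ + 1 : ℝ) : ℂ)).re by simp)] with s hs using h s hs

lemma gL_eq {j : ℕ} {s : ℂ} (hs : 1 < s.re) : gL j s = gD (gPsi j) s := by
  rcases Nat.eq_zero_or_pos j with rfl | hj
  · exact gL_eq_of_large 0 (by simpa using hs)
  · exact eqOn_halfPlane (fun s _ => differentiable_gL hj s)
      (fun s hs => gD_differentiableAt (norm_gPsi_le j) (gPsi_zero j) hs)
      (σ := 2 * j + 1) (by linarith [Nat.cast_nonneg (α := ℝ) j]) (fun s hs => gL_eq_of_large j hs) hs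

lemma deriv_gL {j : ℕ} {s : ℂ} (hs : 1 < s.re) : deriv (gL j) s = deriv (gD (gPsi j)) s := by
  refine Filter.EventuallyEq.deriv_eq ?_
  filter_upwards [(isOpen_lt continuous_const continuous_re).mem_nhds hs] with s hs using gL_eq hs

lemma gL_ne_zero_fun (j : ℕ) : gL j ≠ 0 := by
  obtain ⟨σ, h1, h2⟩ := gD_ne_zero j
  intro h
  exact h2 (by rw [← gL_eq (by simpa using h1), h]; rfl)

/-- The entire function `s (s - 1) ∑ N(z)^{-s}`; the sum is the Dedekind zeta function of `ℚ(i)` times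
the number of units. -/
noncomputable def kZ (s : ℂ) : ℂ :=
  (Real.pi : ℂ) ^ s * (Complex.Gamma s)⁻¹ * ((s - 1) * (s * (thetaPair 0).Λ₀ s - 1) + s)

lemma differentiable_kZ : Differentiable ℂ kZ := by
  have h1 := (thetaPair 0).differentiable_Λ₀
  have h2 := Complex.differentiable_one_div_Gamma
  have h3 : Differentiable ℂ fun s : ℂ => (Real.pi : ℂ) ^ s := fun s =>
    (differentiableAt_id.const_cpow (Or.inl (by exact_mod_cast Real.pi_ne_zero)))
  unfold kZ
  fun_prop

lemma kZ_one : kZ 1 ≠ 0 := by simp [kZ, Real.pi_ne_zero]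

lemma kZ_eq {s : ℂ} (hs : 1 < s.re) : kZ s = s * (s - 1) * gL 0 s := by
  have h0 : s ≠ 0 := by rintro rfl; norm_num at hs
  have h1 : s - 1 ≠ 0 := by
    intro h; rw [sub_eq_zero] at h; rw [h] at hs; norm_num at hs
  have h1' : 1 - s ≠ 0 := by rw [← neg_sub]; exact neg_ne_zero.mpr h1
  have h := (thetaPair 0).Λ₀_eq s
  have hk : (((thetaPair 0).k : ℝ) : ℂ) = 1 := by simp [thetaPair]
  have e1 : (thetaPair 0).f₀ = 1 := by simp [thetaPair]
  have e2 : (thetaPair 0).g₀ = 1 := by simp [thetaPair]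
  have e3 : (thetaPair 0).ε = 1 := by simp [thetaPair]
  rw [hk, e1, e2, e3] at h
  unfold kZ gL
  rw [h]
  simp only [smul_eq_mul, Nat.cast_zero, mul_zero, add_zero]
  field_simp
  ring

/-- `(s - ρ) f'/f` tends to the order `n` of `f` at `ρ`. -/
lemma order_limit {f : ℂ → ℂ} (hf : Differentiable ℂ f) (hf0 : f ≠ 0) (ρ : ℂ) :
    ∃ n : ℕ, (f ρ = 0 → 1 ≤ n) ∧ (f ρ ≠ 0 → n = 0) ∧
      Tendsto (fun s => (s - ρ) * (deriv f s / f s)) (𝓝[≠] ρ) (𝓝 n) ∧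
      ∀ᶠ s in 𝓝[≠] ρ, f s ≠ 0 := by
  obtain ⟨n, g, hg, hgρ, hfg⟩ := entire_split_zero hf hf0 ρ
  have hgne : ∀ᶠ s in 𝓝[≠] ρ, g s ≠ 0 :=
    (hg.continuous.continuousAt.eventually_ne hgρ).filter_mono nhdsWithin_le_nhds
  have hne : ∀ᶠ s in 𝓝[≠] ρ, s ≠ ρ := self_mem_nhdsWithin
  refine ⟨n, fun h => ?_, fun h => ?_, ?_, ?_⟩
  · by_contra hn
    have : n = 0 := by omega
    rw [hfg, this] at h
    simp [hgρ] at h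
  · by_contra hn
    rw [hfg, sub_self, zero_pow hn, zero_mul] at h
    exact h rfl
  · have hlim : Tendsto (fun s => n + (s - ρ) * (deriv g s / g s)) (𝓝[≠] ρ)
        (𝓝 (n + (ρ - ρ) * (deriv g ρ / g ρ))) := by
      refine Tendsto.mono_left ?_ nhdsWithin_le_nhds
      have hd : ContinuousAt (deriv g) ρ := hg.contDiff.continuous_deriv_one.continuousAt
      have hgc := hg.continuous.continuousAt (x := ρ)
      exact (continuousAt_const.add ((continuousAt_id.sub continuousAt_const).mul (hd.div hgc hgρ)))
    rw [sub_self, zero_mul, add_zero] at hlim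
    refine hlim.congr' ?_
    filter_upwards [hgne, hne] with s h1 h2
    have h3 : s - ρ ≠ 0 := sub_ne_zero.mpr h2
    have h4 : deriv f s = n * (s - ρ) ^ (n - 1) * g s + (s - ρ) ^ n * deriv g s := by
      rw [show f = fun z => (z - ρ) ^ n * g z from funext hfg]
      have := (((hasDerivAt_id s).sub_const ρ).pow n).mul (hg s).hasDerivAt
      refine Eq.trans rfl (this.deriv.trans ?_)
      simp
    rw [h4, hfg]
    rcases Nat.eq_zero_or_pos n with hn | hn
    · subst hn; simp
    · obtain ⟨k, rfl⟩ := Nat.exists_eq_succ_of_ne_zero hn.ne'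
      simp only [Nat.succ_eq_add_one, Nat.add_sub_cancel, pow_succ]
      field_simp
  · filter_upwards [hgne, hne] with s h1 h2
    rw [hfg]
    exact mul_ne_zero (pow_ne_zero _ (sub_ne_zero.mpr h2)) h1

lemma tendsto_add_real (ρ : ℂ) : Tendsto (fun x : ℝ => ρ + x) (𝓝[>] 0) (𝓝[≠] ρ) := by
  refine tendsto_nhdsWithin_iff.mpr ⟨?_, ?_⟩
  · refine Tendsto.mono_left ?_ nhdsWithin_le_nhds
    have : ContinuousAt (fun x : ℝ => ρ + (x : ℂ)) 0 := by fun_prop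
    simpa [ContinuousAt] using this
  · filter_upwards [self_mem_nhdsWithin] with x hx
    have : (x : ℂ) ≠ 0 := by exact_mod_cast (ne_of_gt hx)
    simpa using this

/-- Non-vanishing of the angular `L`-functions on `Re s ≥ 1`, by the `3-4-1` method. -/
theorem gL_ne_zero {m : ℕ} (hm : 1 ≤ m) {ρ : ℂ} (hρ : 1 ≤ ρ.re) : gL m ρ ≠ 0 := by
  intro hzero
  obtain ⟨n, hn, -, hlim1, hne1⟩ := order_limit (differentiable_gL hm) (gL_ne_zero_fun m) ρ
  obtain ⟨n', -, -, hlim2, hne2⟩ := order_limit (differentiable_gL (j := 2 * m) (by omega))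
    (gL_ne_zero_fun (2 * m)) (2 * ρ - 1)
  have hkne : kZ ≠ 0 := fun h => kZ_one (by rw [h]; rfl)
  obtain ⟨n₀, -, hn₀, hlim0, hne0⟩ := order_limit differentiable_kZ hkne 1
  rw [hn₀ kZ_one] at hlim0
  have hn1 := hn hzero
  have t1 := hlim1.comp (tendsto_add_real ρ)
  have t2 := hlim2.comp (tendsto_add_real (2 * ρ - 1))
  have t0 := hlim0.comp (tendsto_add_real 1)
  have e1 := (tendsto_add_real ρ).eventually hne1
  have e2 := (tendsto_add_real (2 * ρ - 1)).eventually hne2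
  have e0 := (tendsto_add_real 1).eventually hne0
  have tx : Tendsto (fun x : ℝ => (x : ℂ) / (1 + x)) (𝓝[>] 0) (𝓝 0) := by
    refine Tendsto.mono_left ?_ nhdsWithin_le_nhds
    have : ContinuousAt (fun x : ℝ => (x : ℂ) / (1 + x)) 0 := by
      refine ContinuousAt.div (by fun_prop) (by fun_prop) (by simp)
    simpa [ContinuousAt] using this
  have hT := (((((t0.sub tx).sub_const 1).const_mul 3).add (t1.const_mul 4)).add t2)
  have hTre := (Complex.continuous_re.tendsto _).comp hT
  -- As `x → 0+`, `x` times the sum of logarithmic derivatives in the `3-4-1` inequality tends to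
  -- `-3 + 4 n + n₂`, with `-3` from the pole of the zeta function and `n`, `n₂` the orders of vanishing
  -- at `ρ` and `2 ρ - 1`.
  have hfinal : ((3 : ℂ) * (((0 : ℕ) : ℂ) - 0 - 1) + 4 * n + n').re ≤ 0 := by
    refine le_of_tendsto hTre ?_
    filter_upwards [e0, e1, e2, self_mem_nhdsWithin] with x h0 h1 h2 hx
    have hx : 0 < x := hx
    have hxc : (x : ℂ) ≠ 0 := by exact_mod_cast hx.ne'
    have hC : (gC : ℂ) ≠ 0 := by exact_mod_cast gC_pos.ne'
    have r0 : 1 < ((1 : ℂ) + x).re := by simpa using hx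
    have r1 : 1 < (ρ + (x : ℂ)).re := by simp; linarith
    have r2 : 1 < (2 * ρ - 1 + (x : ℂ)).re := by simp; linarith
    have hx1 : (1 : ℂ) + x ≠ 0 := by intro h; rw [h] at r0; norm_num at r0
    have key : ∀ (j : ℕ) (s : ℂ), 1 < s.re → gL j s ≠ 0 →
        deriv (gL j) s / gL j s = -(∑' y, gS j s y) / gC := fun j s hs hne => by
      have := (gD_logDeriv j hs).2
      rw [← deriv_gL hs, ← gL_eq hs] at this
      field_simp
      linear_combination this
    have hg0 : gL 0 (1 + x) ≠ 0 := fun h => h0 (by rw [kZ_eq r0, h, mul_zero])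
    have hk : deriv kZ (1 + x) / kZ (1 + x) = 1 / (1 + x) + 1 / x + deriv (gL 0) (1 + x) / gL 0 (1 + x) := by
      have hev : kZ =ᶠ[𝓝 (1 + (x : ℂ))] fun s => s * (s - 1) * gL 0 s := by
        filter_upwards [(isOpen_lt continuous_const continuous_re).mem_nhds r0] with s hs using kZ_eq hs
      have hd : DifferentiableAt ℂ (gL 0) (1 + x) := by
        refine (gD_differentiableAt (norm_gPsi_le 0) (gPsi_zero 0) r0).congr_of_eventuallyEq ?_
        filter_upwards [(isOpen_lt continuous_const continuous_re).mem_nhds r0] with s hs using gL_eq hs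
      rw [hev.deriv_eq, hev.eq_of_nhds]
      have h3 := (((hasDerivAt_id (1 + (x : ℂ))).mul ((hasDerivAt_id (1 + (x : ℂ))).sub_const 1)).mul
        hd.hasDerivAt).deriv
      have h4 : deriv (fun s => s * (s - 1) * gL 0 s) (1 + (x : ℂ)) =
          (x + (1 + x)) * gL 0 (1 + x) + (1 + x) * x * deriv (gL 0) (1 + x) := by
        refine Eq.trans ?_ (h3.trans ?_)
        · rfl
        · simp
      rw [h4, add_sub_cancel_left]
      field_simp
    have hineq := gS_inequality m (x := 1 + x) (by linarith) (w := ρ - 1) (by simpa using hρ)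
    rw [show ((1 + x : ℝ) : ℂ) = 1 + x by push_cast; ring, show (1 : ℂ) + x + (ρ - 1) = ρ + x by ring,
      show (1 : ℂ) + x + 2 * (ρ - 1) = 2 * ρ - 1 + x by ring] at hineq
    simp only [Function.comp, add_sub_cancel_left]
    rw [hk, key 0 _ r0 hg0, key m _ r1 h1, key (2 * m) _ r2 h2]
    have hre : 3 * ((x : ℂ) * (1 / (1 + x) + 1 / x + -(∑' y, gS 0 (1 + x) y) / gC) - x / (1 + x) - 1) +
        4 * (x * (-(∑' y, gS m (ρ + x) y) / gC)) + x * (-(∑' y, gS (2 * m) (2 * ρ - 1 + x) y) / gC) =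
        ((-(x / gC) : ℝ) : ℂ) * (3 * ∑' y, gS 0 (1 + x) y + 4 * ∑' y, gS m (ρ + x) y +
          ∑' y, gS (2 * m) (2 * ρ - 1 + x) y) := by
      push_cast
      field_simp
      ring
    rw [hre, Complex.re_ofReal_mul]
    have : 0 ≤ x / gC := div_nonneg hx.le gC_pos.le
    nlinarith
  have h5 : ((3 : ℂ) * (((0 : ℕ) : ℂ) - 0 - 1) + 4 * n + n').re = -3 + 4 * n + n' := by simp
  rw [h5] at hfinal
  have h6 : (1 : ℝ) ≤ n := by exact_mod_cast hn1
  have h7 : (0 : ℝ) ≤ n' := Nat.cast_nonneg _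
  linarith

end

/-! ### The lattice sum `𝒞(1,4m;·)` -/

section

open Complex Metric Set Filter Topology MeasureTheory HurwitzZeta

lemma gPsi_eq_exp (j : ℕ) {z : GaussianInt} (hz : z ≠ 0) :
    gPsi j z = Complex.exp (((4 * j * Complex.arg z.toComplex : ℝ) : ℂ) * I) := by
  have hn : ((‖z.toComplex‖ : ℝ) : ℂ) ≠ 0 := by
    exact_mod_cast norm_ne_zero_iff.mpr (by simpa using hz)
  rw [gPsi, if_neg hz]
  conv_lhs => rw [← Complex.norm_mul_exp_arg_mul_I z.toComplex]
  rw [norm_mul, Complex.norm_exp_ofReal_mul_I, Complex.norm_real, norm_norm, mul_one,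
    mul_div_cancel_left₀ _ hn, ← Complex.exp_nat_mul]
  congr 1; push_cast; ring

lemma gPsi_star (j : ℕ) (z : GaussianInt) : gPsi j (star z) = starRingEnd ℂ (gPsi j z) := by
  by_cases hz : z = 0
  · simp [hz, gPsi_zero]
  have hz' : star z ≠ 0 := by simpa using hz
  rw [gPsi, gPsi, if_neg hz, if_neg hz', GaussianInt.toComplex_star]
  simp

/-- For `Re s > 1` the lattice sum `𝒞(1,4m;s)` is the Dirichlet series of `gPsi m`: the sine part
cancels under `z ↦ conj z`. -/
lemma latC_eq (m : ℕ) {s : ℂ} (hs : 1 < s.re) : latC 1 (4 * m) s = gD (gPsi m) s := by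
  have h1 := hasSum_gD (norm_gPsi_le m) (gPsi_zero m) hs
  have h2 := (Equiv.hasSum_iff (Function.Involutive.toPerm (star : GaussianInt → GaussianInt)
    star_involutive)).mpr h1
  have h3 : HasSum (fun z : GaussianInt => ((gPsi m z).re : ℂ) * (gN z : ℂ) ^ (-s))
      (gD (gPsi m) s) := by
    have h4 := (h1.add h2).mul_left (1 / 2)
    rw [show (1 / 2 : ℂ) * (gD (gPsi m) s + gD (gPsi m) s) = gD (gPsi m) s by ring] at h4
    convert! h4 using 2 with z
    have hN : gN (star z) = gN z := by simp [gN, Zsqrtd.norm_conj]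
    simp only [Function.comp, Function.Involutive.coe_toPerm, gPsi_star, hN]
    rw [← add_mul, Complex.add_conj]
    push_cast
    ring
  have h5 := (Equiv.hasSum_iff gEquiv.symm).mpr h3
  have h6 := (Function.Injective.hasSum_iff (g := fun p : {p : ℤ × ℤ // p ≠ 0} => p.1)
    Subtype.val_injective (fun p hp => by
      have hp0 : p = 0 := by by_contra h; exact hp ⟨⟨p, h⟩, rfl⟩
      subst hp0
      have : gEquiv.symm 0 = 0 := rfl
      simp [this, gPsi_zero])).mpr h5
  rw [latC]
  refine HasSum.tsum_eq ?_
  convert! h6 using 2 with p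
  obtain ⟨p, hp⟩ := p
  have hz : gEquiv.symm p ≠ 0 := fun h => hp (gEquiv.symm.injective h)
  have ht : (gEquiv.symm p).toComplex = (p.1 : ℂ) + p.2 * I := GaussianInt.toComplex_def _
  have hn : ((gN (gEquiv.symm p) : ℝ) : ℂ) = (p.1 : ℂ) ^ 2 + (p.2 : ℂ) ^ 2 := by
    rw [gN_eq_nq]; simp [nq, gEquiv]
  simp only [Function.comp]
  rw [gPsi_eq_exp m hz, ht, hn, Complex.exp_ofReal_mul_I_re, Complex.cpow_neg, latticeAngle, pow_one,
    div_eq_mul_inv]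
  push_cast
  rfl

/-- By the identity theorem, the entire continuation of `𝒞(1,4m;·)` is `gL m`. -/
lemma F_eq_gL {m : ℕ} (hm : 1 ≤ m) {F : ℂ → ℂ} (hF : Differentiable ℂ F)
    (hFeq : ∀ s : ℂ, 1 < s.re → F s = latC 1 (4 * m) s) : F = gL m := by
  have hf : AnalyticOnNhd ℂ F univ := fun z _ => hF.analyticAt z
  have hg : AnalyticOnNhd ℂ (gL m) univ := fun z _ => (differentiable_gL hm).analyticAt z
  refine hf.eq_of_eventuallyEq hg (z₀ := 2) ?_
  filter_upwards [(isOpen_lt continuous_const continuous_re).mem_nhds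
    (show (1 : ℝ) < (2 : ℂ).re by norm_num)] with s hs
  rw [hFeq s hs, latC_eq m hs, gL_eq hs]

end

/-! ### `Delta3` in the critical strip -/

section

open Complex Metric Set Filter Topology MeasureTheory HurwitzZeta

/-- The product of the completed zeta function, the completed `L`-function modulo 4 and the completed
angular `L`-function, each normalized so that the product is invariant under `s ↦ 1 - s`. -/
noncomputable def bigXi (m : ℕ) (χ : DirichletCharacter ℂ 4) (s : ℂ) : ℂ :=
  xiZ s * xiL χ s * (thetaPair m).Λ (s + 2 * m)

/-- The denominator that the Gamma factors of `Delta3` leave in the critical strip. -/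
noncomputable def denQ (m : ℕ) (s : ℂ) : ℂ :=
  s * (1 - s) * ∏ k ∈ Finset.range (2 * m), (1 - s + k)

lemma differentiable_denQ (m : ℕ) : Differentiable ℂ (denQ m) := by
  unfold denQ; fun_prop

lemma differentiable_bigXi {m : ℕ} (hm : 1 ≤ m) {χ : DirichletCharacter ℂ 4} (hχ : χ ≠ 1) :
    Differentiable ℂ (bigXi m χ) := by
  have h1 : Differentiable ℂ fun s : ℂ => s + 2 * (m : ℂ) := by fun_prop
  exact (differentiable_xiZ.mul (differentiable_xiL hχ)).mul ((differentiable_thetaLambda hm).comp h1)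

lemma bigXi_one_sub (m : ℕ) {χ : DirichletCharacter ℂ 4} (hχ : χ ≠ 1) (s : ℂ) :
    bigXi m χ (1 - s) = bigXi m χ s := by
  have h := thetaPair_fe m (s + 2 * m)
  rw [bigXi, bigXi, xiZ_one_sub, xiL_one_sub hχ, ← h]
  congr 2; ring

lemma bigXi_subGaussian {m : ℕ} (hm : 1 ≤ m) {χ : DirichletCharacter ℂ 4} (hχ : χ ≠ 1) :
    SubGaussian (bigXi m χ) := by
  have h1 := (thetaLambda_subGaussian hm).comp_affine 1 (2 * m)
  simp only [one_mul] at h1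
  exact (xiZ_subGaussian.mul (xiL_subGaussian hχ)).mul h1

lemma bigXi_ne_zero_of_one_le {m : ℕ} (hm : 1 ≤ m) {χ : DirichletCharacter ℂ 4} (hχ : χ ≠ 1)
    {s : ℂ} (hs : 1 ≤ s.re) : bigXi m χ s ≠ 0 := by
  have h := gL_ne_zero hm hs
  exact mul_ne_zero (mul_ne_zero (xiZ_ne_zero_of_one_le hs) (xiL_ne_zero_of_one_le hχ hs))
    (mul_ne_zero_iff.mp h).2

lemma Gamma_add_nat_eq_prod {w : ℂ} (hw : 0 < w.re) (n : ℕ) :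
    Complex.Gamma (w + n) = Complex.Gamma w * ∏ k ∈ Finset.range n, (w + k) := by
  induction n with
  | zero => simp
  | succ n ih =>
    have : w + n ≠ 0 := by
      intro h
      have := congrArg Complex.re h
      simp at this
      linarith [Nat.cast_nonneg (α := ℝ) n]
    rw [Finset.prod_range_succ, ← mul_assoc, ← ih, Nat.cast_succ, ← add_assoc,
      Complex.Gamma_add_one _ this, mul_comm]

lemma one_sub_add_ne_zero {s : ℂ} (h1 : s.re < 1) (k : ℕ) : 1 - s + k ≠ 0 := by
  intro h
  have := congrArg Complex.re h
  simp at this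
  linarith [Nat.cast_nonneg (α := ℝ) k]

lemma denQ_ne_zero (m : ℕ) {s : ℂ} (h0 : 0 < s.re) (h1 : s.re < 1) : denQ m s ≠ 0 := by
  refine mul_ne_zero (mul_ne_zero ?_ ?_) (Finset.prod_ne_zero_iff.mpr fun k _ =>
    one_sub_add_ne_zero h1 k)
  · rintro rfl; simp at h0
  · simpa using one_sub_add_ne_zero h1 0

/-- In the critical strip the Gamma factors of `Delta3` reduce to a rational function times the
completions of the three `L`-functions. -/
lemma Delta3_eq (m : ℕ) {χ : DirichletCharacter ℂ 4} (hχ : χ ≠ 1) {s : ℂ} (h0 : 0 < s.re)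
    (h1 : s.re < 1) :
    Delta3 m χ.LFunction (gL m) s = 2 * (Real.pi : ℂ) ^ (2 * m) * (bigXi m χ s / denQ m s) := by
  have hs0 : s ≠ 0 := by rintro rfl; simp at h0
  have hs1 : s ≠ 1 := by rintro rfl; simp at h1
  have hs1' : 1 - s ≠ 0 := sub_ne_zero.mpr hs1.symm
  have hpi : (Real.pi : ℂ) ≠ 0 := by exact_mod_cast Real.pi_ne_zero
  have hpis : (Real.pi : ℂ) ^ s ≠ 0 := by simp [Complex.cpow_eq_zero_iff, hpi]
  have h2s : (2 : ℂ) ^ s ≠ 0 := by simp [Complex.cpow_eq_zero_iff]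
  have hG : Complex.Gamma s ≠ 0 := Complex.Gamma_ne_zero_of_re_pos h0
  have hG1 : Complex.Gamma (1 - s) ≠ 0 := Complex.Gamma_ne_zero_of_re_pos (by simp; linarith)
  have hG2 : Complex.Gamma (s + 2 * m) ≠ 0 := Complex.Gamma_ne_zero_of_re_pos (by
    simp; linarith [Nat.cast_nonneg (α := ℝ) m])
  have hP : ∏ k ∈ Finset.range (2 * m), (1 - s + (k : ℂ)) ≠ 0 :=
    Finset.prod_ne_zero_iff.mpr fun k _ => one_sub_add_ne_zero h1 k
  have hGp := Gamma_add_nat_eq_prod (w := 1 - s) (by simp; linarith) (2 * m)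
  push_cast at hGp
  have hp2 : (Real.pi : ℂ) ^ (2 * s) = (Real.pi : ℂ) ^ s * (Real.pi : ℂ) ^ s := by
    rw [← Complex.cpow_add _ _ hpi]; congr 1; ring
  have hpm : (Real.pi : ℂ) ^ (s + 2 * m) = (Real.pi : ℂ) ^ s * (Real.pi : ℂ) ^ (2 * m) := by
    rw [Complex.cpow_add _ _ hpi, ← Complex.cpow_natCast]; push_cast; rfl
  have hR := Gammaℝ_mul_Gammaℝ_add_one s
  have h2pi : (2 * (Real.pi : ℂ)) ^ (-s) = ((2 : ℂ) ^ s)⁻¹ * ((Real.pi : ℂ) ^ s)⁻¹ := by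
    have := Complex.mul_cpow_ofReal_nonneg (a := 2) (b := Real.pi) (by norm_num) Real.pi_pos.le (-s)
    push_cast at this
    rw [this, Complex.cpow_neg, Complex.cpow_neg]
  rw [Gammaℂ_def, h2pi] at hR
  have hRne : Gammaℝ s * Gammaℝ (s + 1) ≠ 0 := by
    rw [hR]; simp [hG, hpis, h2s]
  obtain ⟨hR1, hR2⟩ := mul_ne_zero_iff.mp hRne
  have hZL : riemannZeta s * χ.LFunction s =
      completedRiemannZeta s * χ.completedLFunction s *
        ((2 : ℂ) ^ s * (Real.pi : ℂ) ^ s / (2 * Complex.Gamma s)) := by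
    rw [riemannZeta_def_of_ne_zero hs0, LFunction_eq_chi4 hχ, div_mul_div_comm, hR]
    field_simp
  rw [Delta3, calF, hGp, hp2, mul_assoc 4, hZL, gL, hpm, bigXi, denQ, xiZ_eq hs0 hs1, xiL]
  field_simp
  ring

/-- The zeros of `bigXi` lie on the critical line, granted the Riemann hypothesis for `Delta3`. -/
lemma bigXi_zero_re {m : ℕ} (hm : 1 ≤ m) {χ : DirichletCharacter ℂ 4} (hχ : χ ≠ 1)
    (hRH : ∀ s : ℂ, 0 < s.re → s.re < 1 → Delta3 m χ.LFunction (gL m) s = 0 → s.re = 1 / 2)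
    {s : ℂ} (hs : bigXi m χ s = 0) : s.re = 1 / 2 := by
  by_cases h1 : 1 ≤ s.re
  · exact absurd hs (bigXi_ne_zero_of_one_le hm hχ h1)
  by_cases h0 : s.re ≤ 0
  · refine absurd ((bigXi_one_sub m hχ s).trans hs) (bigXi_ne_zero_of_one_le hm hχ ?_)
    simpa using h0
  push Not at h0 h1
  exact hRH s h0 h1 (by rw [Delta3_eq m hχ h0 h1, hs]; simp)

end

/-! ### The phase derivative on the critical line -/

section

open Complex Metric Set Filter Topology MeasureTheory HurwitzZeta

/-- The contribution of the denominator `denQ` to `t · Im (Δ₃'/Δ₃)(1/2 + it)`. -/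
noncomputable def denP (m : ℕ) (t : ℝ) : ℝ :=
  2 * (t ^ 2 / ((1 / 2) ^ 2 + t ^ 2)) +
    ∑ k ∈ Finset.range (2 * m), t ^ 2 / (((k : ℝ) + 1 / 2) ^ 2 + t ^ 2)

lemma inv_half_add_im (a t : ℝ) : ((1 : ℂ) / (a - t * I)).im = t / (a ^ 2 + t ^ 2) := by
  rw [one_div, Complex.inv_im]
  simp [Complex.normSq_apply]
  ring

lemma logDeriv_const_sub (c s : ℂ) : logDeriv (fun z : ℂ => c - z) s = -(1 / (c - s)) := by
  rw [logDeriv_apply]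
  simp [neg_div]

lemma mul_logDeriv_denQ_im (m : ℕ) (t : ℝ) :
    t * (logDeriv (denQ m) (1 / 2 + t * I)).im = -denP m t := by
  have h0 : (0 : ℝ) < (1 / 2 + t * I : ℂ).re := by simp
  have h1 : (1 / 2 + t * I : ℂ).re < 1 := by simp; norm_num
  set s : ℂ := 1 / 2 + t * I with hs
  have hs0 : s ≠ 0 := by intro h; rw [h] at h0; simp at h0
  have hs1 : 1 - s ≠ 0 := by simpa using one_sub_add_ne_zero h1 0
  have hP : ∀ k ∈ Finset.range (2 * m), (1 - s + (k : ℂ)) ≠ 0 := fun k _ => one_sub_add_ne_zero h1 k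
  have e : logDeriv (denQ m) s =
      1 / s - 1 / (1 - s) - ∑ k ∈ Finset.range (2 * m), 1 / (1 - s + k) := by
    unfold denQ
    rw [logDeriv_mul s (f := fun z : ℂ => z * (1 - z)) (mul_ne_zero hs0 hs1)
      (Finset.prod_ne_zero_iff.mpr hP) (by fun_prop) (by fun_prop),
      logDeriv_mul s (f := fun z : ℂ => z) (g := fun z : ℂ => 1 - z) hs0 hs1 (by fun_prop)
      (by fun_prop), logDeriv_const_sub,
      logDeriv_prod (f := fun (k : ℕ) (z : ℂ) => 1 - z + (k : ℂ)) hP (fun k _ => by fun_prop),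
      logDeriv_apply, sub_eq_add_neg _ (∑ k ∈ _, _), ← Finset.sum_neg_distrib]
    congr 1
    · simp [sub_eq_add_neg]
    · refine Finset.sum_congr rfl fun k _ => ?_
      rw [show (fun z : ℂ => 1 - z + (k : ℂ)) = fun z : ℂ => (1 + (k : ℂ)) - z by funext z; ring,
        logDeriv_const_sub]
      congr 2; ring
  have e0 : (1 / s).im = -(t / ((1 / 2) ^ 2 + t ^ 2)) := by
    have := inv_half_add_im (1 / 2) (-t)
    rw [neg_sq, neg_div] at this
    rw [← this, hs]; push_cast; congr 2; ring
  have e1 : ∀ k : ℕ, (1 / (1 - s + k)).im = t / (((k : ℝ) + 1 / 2) ^ 2 + t ^ 2) := fun k => by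
    rw [← inv_half_add_im, hs]; push_cast; congr 2; ring
  have e2 := e1 0
  simp only [Nat.cast_zero, add_zero, zero_add] at e2
  rw [e, Complex.sub_im, Complex.sub_im, Complex.im_sum, e0, e2]
  simp only [e1, denP]
  rw [mul_sub, Finset.mul_sum]
  have : ∀ k : ℕ, t * (t / (((k : ℝ) + 1 / 2) ^ 2 + t ^ 2)) =
      t ^ 2 / (((k : ℝ) + 1 / 2) ^ 2 + t ^ 2) := fun k => by ring
  simp only [this]
  ring

lemma denP_neg (m : ℕ) (t : ℝ) : denP m (-t) = denP m t := by simp [denP]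

lemma sq_div_lt {a t t' : ℝ} (ha : 0 < a) (ht : 0 ≤ t) (h : t < t') :
    t ^ 2 / (a ^ 2 + t ^ 2) < t' ^ 2 / (a ^ 2 + t' ^ 2) := by
  rw [div_lt_div_iff₀ (by positivity) (by positivity)]
  have h1 : t ^ 2 < t' ^ 2 := by nlinarith
  have h2 : 0 < a ^ 2 := by positivity
  nlinarith

lemma denP_lt {m : ℕ} {t t' : ℝ} (ht : 0 ≤ t) (h : t < t') : denP m t < denP m t' := by
  unfold denP
  have h1 := sq_div_lt (a := 1 / 2) (by norm_num) ht h
  have h2 : ∑ k ∈ Finset.range (2 * m), t ^ 2 / (((k : ℝ) + 1 / 2) ^ 2 + t ^ 2) ≤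
      ∑ k ∈ Finset.range (2 * m), t' ^ 2 / (((k : ℝ) + 1 / 2) ^ 2 + t' ^ 2) :=
    Finset.sum_le_sum fun k _ => (sq_div_lt (by positivity) ht h).le
  linarith

lemma denP_pos {m : ℕ} {t : ℝ} (ht : 0 < t) : 0 < denP m t := by
  have : denP m 0 = 0 := by simp [denP]
  rw [← this]; exact denP_lt le_rfl ht

lemma mem_strip (t : ℝ) : 0 < (1 / 2 + t * I : ℂ).re ∧ (1 / 2 + t * I : ℂ).re < 1 := by
  constructor
  · simp
  · simp; norm_num

lemma isOpen_strip : IsOpen {s : ℂ | 0 < s.re ∧ s.re < 1} :=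
  (isOpen_lt continuous_const continuous_re).inter (isOpen_lt continuous_re continuous_const)

lemma Delta3_eventuallyEq (m : ℕ) {χ : DirichletCharacter ℂ 4} (hχ : χ ≠ 1) (t : ℝ) :
    Delta3 m χ.LFunction (gL m) =ᶠ[𝓝 (1 / 2 + t * I : ℂ)]
      fun s => 2 * (Real.pi : ℂ) ^ (2 * m) * (bigXi m χ s / denQ m s) := by
  filter_upwards [isOpen_strip.mem_nhds (mem_strip t)] with s hs using Delta3_eq m hχ hs.1 hs.2

lemma Delta3_differentiableAt {m : ℕ} (hm : 1 ≤ m) {χ : DirichletCharacter ℂ 4} (hχ : χ ≠ 1) (t : ℝ) :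
    DifferentiableAt ℂ (Delta3 m χ.LFunction (gL m)) (1 / 2 + t * I) := by
  refine DifferentiableAt.congr_of_eventuallyEq ?_ (Delta3_eventuallyEq m hχ t)
  exact ((differentiable_bigXi hm hχ _).div (differentiable_denQ m _)
    (denQ_ne_zero m (mem_strip t).1 (mem_strip t).2)).const_mul _

lemma Delta3_eq_zero_iff {m : ℕ} {χ : DirichletCharacter ℂ 4} (hχ : χ ≠ 1) (t : ℝ) :
    Delta3 m χ.LFunction (gL m) (1 / 2 + t * I) = 0 ↔ bigXi m χ (1 / 2 + t * I) = 0 := by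
  rw [Delta3_eq m hχ (mem_strip t).1 (mem_strip t).2]
  have hQ := denQ_ne_zero m (mem_strip t).1 (mem_strip t).2
  have hpi : (2 : ℂ) * (Real.pi : ℂ) ^ (2 * m) ≠ 0 := by simp [Real.pi_ne_zero]
  rw [mul_eq_zero, div_eq_zero_iff, or_iff_right hpi, or_iff_left hQ]

/-- The completed product on the critical line, as an even entire function of `z = -i(s - 1/2)`. -/
noncomputable def lineXi (m : ℕ) (χ : DirichletCharacter ℂ 4) (z : ℂ) : ℂ :=
  bigXi m χ (I * z + 1 / 2)

lemma lineXi_apply (m : ℕ) (χ : DirichletCharacter ℂ 4) (z : ℂ) :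
    lineXi m χ z = bigXi m χ (1 / 2 + z * I) := by
  rw [lineXi]; congr 1; ring

/-- Multiplied by `t`, the phase derivative is a Hadamard sum plus the strictly increasing
contribution `denP` of the Gamma factors. -/
lemma mul_phase {m : ℕ} (hm : 1 ≤ m) {χ : DirichletCharacter ℂ 4} (hχ : χ ≠ 1) {t : ℝ}
    (ht : lineXi m χ t ≠ 0) :
    t * (deriv (Delta3 m χ.LFunction (gL m)) (1 / 2 + t * I) /
      Delta3 m χ.LFunction (gL m) (1 / 2 + t * I)).im =
      denP m t - ((t : ℂ) * logDeriv (lineXi m χ) t).re := by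
  have hQ := denQ_ne_zero m (mem_strip t).1 (mem_strip t).2
  have hX : bigXi m χ (1 / 2 + t * I) ≠ 0 := by rwa [← lineXi_apply]
  have hpi : (2 : ℂ) * (Real.pi : ℂ) ^ (2 * m) ≠ 0 := by simp [Real.pi_ne_zero]
  have e1 : deriv (Delta3 m χ.LFunction (gL m)) (1 / 2 + t * I) /
      Delta3 m χ.LFunction (gL m) (1 / 2 + t * I) =
      logDeriv (bigXi m χ) (1 / 2 + t * I) - logDeriv (denQ m) (1 / 2 + t * I) := by
    rw [(Delta3_eventuallyEq m hχ t).deriv_eq, (Delta3_eventuallyEq m hχ t).eq_of_nhds,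
      ← logDeriv_apply, logDeriv_const_mul _ _ hpi,
      logDeriv_div _ hX hQ (differentiable_bigXi hm hχ _) (differentiable_denQ m _)]
  have e2 : logDeriv (lineXi m χ) t = logDeriv (bigXi m χ) (1 / 2 + t * I) * I := by
    have hd : HasDerivAt (fun z : ℂ => I * z + 1 / 2) I (t : ℂ) := by
      simpa using ((hasDerivAt_id (t : ℂ)).const_mul I).add_const (1 / 2 : ℂ)
    have := logDeriv_comp (f := bigXi m χ) (g := fun z : ℂ => I * z + 1 / 2) (x := (t : ℂ))
      (differentiable_bigXi hm hχ _) hd.differentiableAt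
    rw [hd.deriv, show I * (t : ℂ) + 1 / 2 = 1 / 2 + t * I by ring] at this
    exact this
  have e3 := mul_logDeriv_denQ_im m t
  rw [e1, e2, Complex.sub_im, mul_sub, e3, Complex.re_ofReal_mul, Complex.mul_I_re]
  ring

/-- Rolle's theorem for `|Δ₃|²` along the segment; its derivative is `-2 |Δ₃|² Im (Δ₃'/Δ₃)`. -/
lemma exists_phase_zero {m : ℕ} (hm : 1 ≤ m) {χ : DirichletCharacter ℂ 4} (hχ : χ ≠ 1)
    {t₀ t₁ : ℝ} (hlt : t₀ < t₁)
    (h₀ : Delta3 m χ.LFunction (gL m) (1 / 2 + t₀ * I) = 0)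
    (h₁ : Delta3 m χ.LFunction (gL m) (1 / 2 + t₁ * I) = 0)
    (hb : ∀ t ∈ Set.Ioo t₀ t₁, Delta3 m χ.LFunction (gL m) (1 / 2 + t * I) ≠ 0) :
    ∃ t ∈ Set.Ioo t₀ t₁, (deriv (Delta3 m χ.LFunction (gL m)) (1 / 2 + t * I) /
        Delta3 m χ.LFunction (gL m) (1 / 2 + t * I)).im = 0 := by
  set D := Delta3 m χ.LFunction (gL m) with hD
  have hder : ∀ t : ℝ, HasDerivAt (fun u : ℝ => D (1 / 2 + u * I))
      (deriv D (1 / 2 + t * I) * I) t := fun t => by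
    have hd : HasDerivAt (fun z : ℂ => 1 / 2 + z * I) I (t : ℂ) := by
      simpa using ((hasDerivAt_id (t : ℂ)).mul_const I).const_add (1 / 2 : ℂ)
    exact ((Delta3_differentiableAt hm hχ t).hasDerivAt.comp (t : ℂ) hd).comp_ofReal
  have hder2 := fun t => (hder t).norm_sq
  obtain ⟨t, ht, hz⟩ := exists_hasDerivAt_eq_zero (f := fun u : ℝ => ‖D (1 / 2 + u * I)‖ ^ 2) hlt
    (fun t _ => (hder2 t).continuousAt.continuousWithinAt) (by simp only [h₀, h₁]) (fun t _ => hder2 t)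
  refine ⟨t, ht, ?_⟩
  have hne := hb t ht
  set A := D (1 / 2 + t * I)
  set B := deriv D (1 / 2 + t * I)
  have h3 : B = B / A * A := by field_simp
  have h4 : 0 < Complex.normSq A := Complex.normSq_pos.mpr hne
  have h5 : 2 * inner ℝ A (B * I) = -2 * Complex.normSq A * (B / A).im := by
    conv_lhs => rw [h3]
    rw [Complex.inner, Complex.normSq_apply]
    simp
    ring
  rw [h5] at hz
  rcases mul_eq_zero.mp hz with h | h
  · linarith
  · exact h

/-- Granted the Riemann hypothesis, the phase derivative cannot vanish twice on an interval without
zeros, since `t · Im (Δ₃'/Δ₃)` is strictly increasing on `t > 0`, even, and positive for `t ≠ 0` if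
the interval contains the origin. -/
theorem phase_unique {m : ℕ} (hm : 1 ≤ m) {χ : DirichletCharacter ℂ 4} (hχ : χ ≠ 1)
    (hRH : ∀ s : ℂ, 0 < s.re → s.re < 1 → Delta3 m χ.LFunction (gL m) s = 0 → s.re = 1 / 2)
    {t₀ t₁ : ℝ} (hb : ∀ t ∈ Set.Ioo t₀ t₁, Delta3 m χ.LFunction (gL m) (1 / 2 + t * I) ≠ 0)
    {t t' : ℝ} (ht : t ∈ Set.Ioo t₀ t₁) (ht' : t' ∈ Set.Ioo t₀ t₁) (htt : t < t')
    (hz : (deriv (Delta3 m χ.LFunction (gL m)) (1 / 2 + t * I) /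
        Delta3 m χ.LFunction (gL m) (1 / 2 + t * I)).im = 0)
    (hz' : (deriv (Delta3 m χ.LFunction (gL m)) (1 / 2 + t' * I) /
        Delta3 m χ.LFunction (gL m) (1 / 2 + t' * I)).im = 0) : False := by
  set E := lineXi m χ with hE
  have hd : Differentiable ℂ E := (differentiable_bigXi hm hχ).comp (by fun_prop)
  have heven : ∀ z, E (-z) = E z := fun z => by
    rw [hE, lineXi, lineXi, ← bigXi_one_sub m hχ]; congr 1; ring
  have hG : SubGaussian E := (bigXi_subGaussian hm hχ).comp_affine I (1 / 2)
  have hreal : ∀ a, E a = 0 → a.im = 0 := fun a ha => by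
    have := bigXi_zero_re hm hχ hRH ha
    simpa using this
  have hno : ∀ u ∈ Set.Ioo t₀ t₁, E (u : ℂ) ≠ 0 := fun u hu => by
    rw [hE, lineXi_apply, Ne, ← Delta3_eq_zero_iff hχ]; exact hb u hu
  have hno' : ∀ u : ℝ, -u ∈ Set.Ioo t₀ t₁ → E (u : ℂ) ≠ 0 := fun u hu => by
    have := hno _ hu
    rw [Complex.ofReal_neg, heven] at this; exact this
  have hev : ∀ u : ℝ, ((u : ℂ) * logDeriv E u).re = (((-u : ℝ) : ℂ) * logDeriv E ((-u : ℝ) : ℂ)).re :=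
    fun u => by rw [Complex.ofReal_neg, logDeriv_even heven]; simp
  have k := mul_phase hm hχ (hno t ht)
  have k' := mul_phase hm hχ (hno t' ht')
  rw [hz, mul_zero] at k
  rw [hz', mul_zero] at k'
  rw [← hE] at k k'
  rcases lt_or_ge 0 t with h | h
  · have a := hadamard_antitone hd heven hG hreal h htt.le
      (fun u hu => hno u ⟨ht.1.trans_le hu.1, hu.2.trans_lt ht'.2⟩)
    have b := denP_lt (m := m) h.le htt
    linarith
  -- Negative `t` and `t'` reduce to the positive axis by evenness.
  rcases lt_or_ge t' 0 with h' | h'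
  · have a := hadamard_antitone hd heven hG hreal (t := -t') (t' := -t) (by linarith) (by linarith)
      (fun u hu => hno' u ⟨by linarith [hu.2, ht.1], by linarith [hu.1, ht'.2]⟩)
    have b := denP_lt (m := m) (t := -t') (t' := -t) (by linarith) (by linarith)
    rw [← hev, ← hev] at a
    rw [denP_neg, denP_neg] at b
    linarith
  -- Here `t ≤ 0 ≤ t'`, not both zero, and the phase derivative has a sign at a nonzero one.
  rcases h.lt_or_eq with h1 | h1
  · have a := hadamard_nonpos hd heven hG hreal (t := -t) (by linarith)
      (fun u hu => hno' u ⟨by linarith [hu.2, ht.1], by linarith [hu.1, ht'.2]⟩)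
    have b := denP_pos (m := m) (t := -t) (by linarith)
    rw [← hev] at a
    rw [denP_neg] at b
    linarith
  · have a := hadamard_nonpos hd heven hG hreal (t := t') (by linarith)
      (fun u hu => hno u ⟨by linarith [hu.1, ht.1], by linarith [hu.2, ht'.2]⟩)
    have b := denP_pos (m := m) (t := t') (by linarith)
    linarith

end

/-- Assuming the Riemann hypothesis for `Δ₃(2,2m;·)`, between two successive zeros
`1/2 + i t₀` and `1/2 + i t₁` on the critical line there is exactly one `t ∈ (t₀, t₁)`
at which `∂(arg Δ₃)/∂σ = Im (Δ₃'/Δ₃) (1/2 + i t)` vanishes. -/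
theorem unique_phase_derivative_zero_between_zeros (m : ℕ) (hm : 1 ≤ m)
    (χ : DirichletCharacter ℂ 4) (hχ : χ ≠ 1)
    (F : ℂ → ℂ) (hF : Differentiable ℂ F)
    (hFeq : ∀ s : ℂ, 1 < s.re → F s = latC 1 (4 * m) s)
    (hRH : ∀ s : ℂ, 0 < s.re → s.re < 1 → Delta3 m χ.LFunction F s = 0 → s.re = 1 / 2)
    (t₀ t₁ : ℝ) (hlt : t₀ < t₁)
    (h₀ : Delta3 m χ.LFunction F (1 / 2 + t₀ * Complex.I) = 0)
    (h₁ : Delta3 m χ.LFunction F (1 / 2 + t₁ * Complex.I) = 0)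
    (hbetween : ∀ t ∈ Set.Ioo t₀ t₁, Delta3 m χ.LFunction F (1 / 2 + t * Complex.I) ≠ 0) :
    ∃! t : ℝ, t ∈ Set.Ioo t₀ t₁ ∧
      (deriv (Delta3 m χ.LFunction F) (1 / 2 + t * Complex.I) /
        Delta3 m χ.LFunction F (1 / 2 + t * Complex.I)).im = 0 := by
  obtain rfl := F_eq_gL hm hF hFeq
  obtain ⟨t, ht, hz⟩ := exists_phase_zero hm hχ hlt h₀ h₁ hbetween
  refine ⟨t, ⟨ht, hz⟩, fun t' ⟨ht', hz'⟩ => ?_⟩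
  rcases lt_trichotomy t' t with h | h | h
  · exact (phase_unique hm hχ hRH hbetween ht' ht h hz' hz).elim
  · exact h
  · exact (phase_unique hm hχ hRH hbetween ht ht' h hz hz').elim
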